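/- Let S = k[x_0,…,x_n, y_0,…,y_m] be a bigraded polynomial ring and let V be a complete intersection scheme of points in P^n × P^m defined by I = (f_1,…,f_{n+m}) with deg(f_i) = (d,e) for all i. If μ ∈ Z² does not belong to ⋃_{i ≥ 2} Γ_i, then HF_{S/I}(μ) = χ(μ), where χ(a,b) = Σ_i (−1)^i C(n+m, i) C(n+a−id, n) C(m+b−ie, m). -/

import Mathlib

open MvPolynomial Pointwise

noncomputable section

/-- The bigraded polynomial ring `S = k[x_0,…,x_n,y_0,…,y_m]`. -/
abbrev PolyS (k : Type) [Field k] (n m : ℕ) := MvPolynomial (Fin (n+1) ⊕ Fin (m+1)) k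

/-- The bigrading weights: `deg x_i = (1,0)`, `deg y_j = (0,1)`. -/
def wt (n m : ℕ) : (Fin (n+1) ⊕ Fin (m+1)) → ℤ × ℤ :=
  Sum.elim (fun _ => (1,0)) (fun _ => (0,1))

/-- The bigraded piece of `S` in bidegree `γ`. -/
def grad (k : Type) [Field k] (n m : ℕ) (γ : ℤ × ℤ) : Submodule k (PolyS k n m) :=
  weightedHomogeneousSubmodule k (wt n m) γ

/-- `B₁ = (x_0,…,x_n)`. -/
def Bone (k : Type) [Field k] (n m : ℕ) : Ideal (PolyS k n m) :=
  Ideal.span (Set.range fun i => X (Sum.inl i))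

/-- `B₂ = (y_0,…,y_m)`. -/
def Btwo (k : Type) [Field k] (n m : ℕ) : Ideal (PolyS k n m) :=
  Ideal.span (Set.range fun j => X (Sum.inr j))

/-- `B = B₁ ⬝ B₂`, the irrelevant ideal of `ℙⁿ × ℙᵐ`. -/
def Birr (k : Type) [Field k] (n m : ℕ) : Ideal (PolyS k n m) := Bone k n m * Btwo k n m

/-- The saturation `I : C^∞` of an ideal. -/
def satIdeal {k : Type} [Field k] {n m : ℕ} (I C : Ideal (PolyS k n m)) :
    Ideal (PolyS k n m) :=
  ⨆ t : ℕ, Submodule.colon I (C ^ t)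

/-- The bidegree-`γ` piece of `S ⧸ I`, as a `k`-subspace. -/
def quotPiece (k : Type) [Field k] (n m : ℕ) (I : Ideal (PolyS k n m)) (γ : ℤ × ℤ) :
    Submodule k ((PolyS k n m) ⧸ I) :=
  (grad k n m γ).map (Ideal.Quotient.mkₐ k I).toLinearMap

/-- The bigraded Hilbert function of `S ⧸ I`. -/
def HFq (k : Type) [Field k] (n m : ℕ) (I : Ideal (PolyS k n m)) (γ : ℤ × ℤ) : ℕ :=
  Module.finrank k (quotPiece k n m I γ)

/-- The bigraded Hilbert function of the subscheme of `ℙⁿ × ℙᵐ` defined by `I`, i.e. the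
Hilbert function of `S ⧸ (I : B^∞)`. -/
def HFV (k : Type) [Field k] (n m : ℕ) (I : Ideal (PolyS k n m)) (γ : ℤ × ℤ) : ℕ :=
  HFq k n m (satIdeal I (Birr k n m)) γ

/-- `codim V = r`, encoded as: the cone over `V` (i.e. `Spec` of `S` modulo the saturation
of `I`) has Krull dimension `n + m + 2 - r`. -/
def CodimEq (k : Type) [Field k] (n m : ℕ) (I : Ideal (PolyS k n m)) (r : ℕ) : Prop :=
  ringKrullDim ((PolyS k n m) ⧸ satIdeal I (Birr k n m)) = ((n + m + 2 - r : ℕ) : WithBot ℕ∞)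

/-- The Hilbert function of `S` itself. -/
def HFS (k : Type) [Field k] (n m : ℕ) (γ : ℤ × ℤ) : ℕ :=
  Module.finrank k (grad k n m γ)

/-- Integer binomial coefficient `C(x,t)`, with the Hilbert-function convention that it
vanishes for `x < 0`. -/
def ibin (x : ℤ) (t : ℕ) : ℤ := if x < 0 then 0 else (x.toNat.choose t : ℤ)

/-- `χ(a,b) = Σᵢ (−1)^i C(n+m,i) C(n+a−id,n) C(m+b−ie,m)`. -/
def chiCI (n m d e : ℕ) (γ : ℤ × ℤ) : ℤ :=
  ∑ i ∈ Finset.range (n + m + 1),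
    (-1) ^ i * (Nat.choose (n + m) i : ℤ) *
      ibin ((n : ℤ) + γ.1 - i * d) n * ibin ((m : ℤ) + γ.2 - i * e) m

/-- `v_i = i·(d,e) − (n+1,0)`. -/
def vpt (n d e : ℕ) (i : ℤ) : ℤ × ℤ := (i * d - (n + 1), i * e)

/-- `w_i = i·(d,e) − (0,m+1)`. -/
def wpt (m d e : ℕ) (i : ℤ) : ℤ × ℤ := (i * d, i * e - (m + 1))

/-- `σ = (n+m)·(d,e) − (n+1,m+1)`. -/
def sigmaPt (n m d e : ℕ) : ℤ × ℤ :=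
  ((n + m : ℤ) * d - (n + 1), (n + m : ℤ) * e - (m + 1))

/-- `Γ_i = Supp(H^{n+1}_{B₁}(K_{n+i}(f,S))) ∪ Supp(H^{m+1}_{B₂}(K_{m+i}(f,S)))`, computed
explicitly: for `0 ≤ n+i ≤ n+m` the first support is `v_{n+i} + (−ℕ,ℕ)`, and for
`0 ≤ m+i ≤ n+m` the second support is `w_{m+i} + (ℕ,−ℕ)`; otherwise the Koszul terms
vanish. -/
def GammaSet (n m d e : ℕ) (i : ℤ) : Set (ℤ × ℤ) :=
  {γ | (0 ≤ (n : ℤ) + i ∧ (n : ℤ) + i ≤ (n : ℤ) + m ∧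
          γ.1 ≤ ((n : ℤ) + i) * d - ((n : ℤ) + 1) ∧ ((n : ℤ) + i) * e ≤ γ.2) ∨
       (0 ≤ (m : ℤ) + i ∧ (m : ℤ) + i ≤ (n : ℤ) + m ∧
          ((m : ℤ) + i) * d ≤ γ.1 ∧ γ.2 ≤ ((m : ℤ) + i) * e - ((m : ℤ) + 1))}

/-- `V = Proj(S/I)` is a complete intersection scheme of points in `ℙⁿ × ℙᵐ` defined by
`n+m` forms of bidegree `(d,e)`: `I` is generated by the `f i`, each `f i` is bihomogeneous
of bidegree `(d,e)`, and `V` is zero-dimensional (codimension `n+m`). -/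
def IsCIPoints (k : Type) [Field k] (n m d e : ℕ) (f : Fin (n + m) → PolyS k n m)
    (I : Ideal (PolyS k n m)) : Prop :=
  (∀ i, f i ∈ grad k n m ((d : ℤ), (e : ℤ))) ∧ I = Ideal.span (Set.range f) ∧
    CodimEq k n m I (n + m)


set_option linter.unusedSectionVars false
set_option linter.unusedSimpArgs false

section FinsetOps

variable {ι : Type} [DecidableEq ι]

/-- Koszul sign of `i` relative to `T`. -/
def sg (ord : ι → ℕ) (i : ι) (T : Finset ι) : ℤ := (-1) ^ (T.filter (fun j => ord j < ord i)).card

lemma sg_mul_self (ord : ι → ℕ) (i : ι) (T : Finset ι) : sg ord i T * sg ord i T = 1 := by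
  unfold sg
  rw [← pow_add, ← two_mul, pow_mul]; simp

lemma sg_insert_self (ord : ι → ℕ) (i : ι) (T : Finset ι) : sg ord i (insert i T) = sg ord i T := by
  unfold sg
  rw [Finset.filter_insert]; simp

lemma sg_erase_self (ord : ι → ℕ) (i : ι) (T : Finset ι) : sg ord i (T.erase i) = sg ord i T := by
  by_cases h : i ∈ T
  · conv_rhs => rw [← Finset.insert_erase h]
    rw [sg_insert_self]
  · rw [Finset.erase_eq_of_notMem h]

lemma sg_insert (ord : ι → ℕ) (i j : ι) (T : Finset ι) (hj : j ∉ T) :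
    sg ord i (insert j T) = if ord j < ord i then - sg ord i T else sg ord i T := by
  unfold sg
  rw [Finset.filter_insert]
  split_ifs with h
  · rw [Finset.card_insert_of_notMem (by simp [hj]), pow_succ]; ring
  · rfl

lemma sg_swap (ord : ι → ℕ) (hord : Function.Injective ord) (i j : ι) (hij : i ≠ j) (T : Finset ι)
    (hi : i ∉ T) (hj : j ∉ T) :
    sg ord i T * sg ord j (insert i T) = - (sg ord j T * sg ord i (insert j T)) := by
  rw [sg_insert _ _ _ _ hi, sg_insert _ _ _ _ hj]
  have : ord i ≠ ord j := fun h => hij (hord h)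
  rcases lt_or_gt_of_ne this with h | h
  · rw [if_pos h, if_neg (by omega)]; ring
  · rw [if_neg (by omega), if_pos h]; ring

variable (R : Type) [CommRing R] {M : Type} [AddCommGroup M] [Module R M]

/-- Wedge operator. -/
def ee (ord : ι → ℕ) (i : ι) : (Finset ι → M) →ₗ[R] (Finset ι → M) where
  toFun c T := if i ∈ T then sg ord i T • c (T.erase i) else 0
  map_add' c c' := by ext T; simp only [Pi.add_apply]; split_ifs <;> simp
  map_smul' r c := by
    ext T; simp only [Pi.smul_apply, RingHom.id_apply]
    split_ifs
    · rw [smul_comm]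
    · simp

/-- Contraction operator. -/
def hh (ord : ι → ℕ) (i : ι) : (Finset ι → M) →ₗ[R] (Finset ι → M) where
  toFun c T := if i ∉ T then sg ord i T • c (insert i T) else 0
  map_add' c c' := by ext T; simp only [Pi.add_apply]; split_ifs <;> simp
  map_smul' r c := by
    ext T; simp only [Pi.smul_apply, RingHom.id_apply]
    split_ifs
    · simp
    · rw [smul_comm]

lemma ee_apply (ord : ι → ℕ) (i : ι) (c : Finset ι → M) (T : Finset ι) :
    ee R ord i c T = if i ∈ T then sg ord i T • c (T.erase i) else 0 := rfl

lemma hh_apply (ord : ι → ℕ) (i : ι) (c : Finset ι → M) (T : Finset ι) :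
    hh R ord i c T = if i ∉ T then sg ord i T • c (insert i T) else 0 := rfl

lemma hh_hh_self (ord : ι → ℕ) (i : ι) (c : Finset ι → M) : hh R ord i (hh R ord i c) = 0 := by
  ext T; simp only [hh_apply, Pi.zero_apply]
  split_ifs <;> simp_all

lemma ee_ee_self (ord : ι → ℕ) (i : ι) (c : Finset ι → M) : ee R ord i (ee R ord i c) = 0 := by
  ext T; simp only [ee_apply, Pi.zero_apply]
  split_ifs <;> simp_all

lemma hh_hh (ord : ι → ℕ) (hord : Function.Injective ord) (i j : ι) (hij : i ≠ j)
    (c : Finset ι → M) : hh R ord i (hh R ord j c) = - hh R ord j (hh R ord i c) := by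
  ext T; simp only [hh_apply, Pi.neg_apply]
  by_cases hi : i ∈ T
  · simp [hi]
  by_cases hj : j ∈ T
  · simp [hj]
  rw [if_pos hi, if_pos hj, if_pos (by simp [hj, hij.symm]), if_pos (by simp [hi, hij]),
    smul_smul, smul_smul, sg_swap ord hord i j hij T hi hj, Finset.insert_comm, neg_smul]

lemma ee_ee (ord : ι → ℕ) (hord : Function.Injective ord) (i j : ι) (hij : i ≠ j)
    (c : Finset ι → M) : ee R ord i (ee R ord j c) = - ee R ord j (ee R ord i c) := by
  ext T; simp only [ee_apply, Pi.neg_apply]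
  by_cases hi : i ∈ T
  swap
  · simp [hi]
  by_cases hj : j ∈ T
  swap
  · simp [hj]
  rw [if_pos hi, if_pos hj, if_pos (by simp [hj, hij.symm]), if_pos (by simp [hi, hij]),
    smul_smul, smul_smul, Finset.erase_right_comm]
  obtain ⟨U, hU1, hU2, rfl⟩ : ∃ U : Finset ι, i ∉ U ∧ j ∉ U ∧ T = insert i (insert j U) :=
    ⟨(T.erase i).erase j, by simp, by simp, by
      rw [Finset.insert_erase (by simp [hj, hij.symm]), Finset.insert_erase hi]⟩
  have e1 : (insert i (insert j U)).erase i = insert j U :=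
    Finset.erase_insert (by simp [hU1, hij])
  have e2 : (insert i (insert j U)).erase j = insert i U := by
    rw [Finset.insert_comm]; exact Finset.erase_insert (by simp [hU2, hij.symm])
  rw [e1, e2, sg_insert_self, sg_insert_self, sg_insert_self, Finset.insert_comm, sg_insert_self,
    ← neg_smul]
  congr 1
  rw [mul_comm (sg ord i _), mul_comm (sg ord j (insert i U)), sg_swap ord hord i j hij U hU1 hU2,
    neg_neg]

lemma ee_hh (ord : ι → ℕ) (hord : Function.Injective ord) (i j : ι) (hij : i ≠ j)
    (c : Finset ι → M) : ee R ord i (hh R ord j c) = - hh R ord j (ee R ord i c) := by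
  ext T; simp only [ee_apply, hh_apply, Pi.neg_apply]
  by_cases hi : i ∈ T
  swap
  · simp [hi, hij]
  by_cases hj : j ∈ T
  · simp [hj, hij.symm]
  obtain ⟨U, hU1, rfl⟩ : ∃ U : Finset ι, i ∉ U ∧ T = insert i U :=
    ⟨(T.erase i), by simp, by rw [Finset.insert_erase hi]⟩
  have hjU : j ∉ U := fun h => hj (by simp [h])
  rw [if_pos hi, if_pos hj, if_pos (by simp [hjU, hij, hj]), if_pos (by simp [hi, hij]),
    smul_smul, smul_smul, Finset.erase_insert hU1, Finset.insert_comm j i U, 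
    Finset.erase_insert (by simp [hU1, hij]), ← neg_smul, sg_insert_self, sg_insert_self]
  congr 1
  have := sg_swap ord hord i j hij U hU1 hjU
  have a1 := sg_mul_self ord i U
  have a2 := sg_mul_self ord i (insert j U)
  linear_combination (sg ord i U * sg ord i (insert j U)) * this
    - (sg ord j (insert i U) * sg ord i (insert j U)) * a1 - (sg ord i U * sg ord j U) * a2

lemma ee_hh_self (ord : ι → ℕ) (i : ι)
    (c : Finset ι → M) : ee R ord i (hh R ord i c) + hh R ord i (ee R ord i c) = c := by
  ext T; simp only [ee_apply, hh_apply, Pi.add_apply]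
  by_cases hi : i ∈ T
  · simp [hi, sg_erase_self, smul_smul, sg_mul_self]
  · simp [hi, sg_insert_self, smul_smul, sg_mul_self]

lemma sum_anti {α : Type} [AddCommGroup α] [Fintype ι] (F : ι → ι → α) (h1 : ∀ i, F i i = 0)
    (h2 : ∀ i j, i ≠ j → F i j = - F j i) : ∑ i, ∑ j, F i j = 0 := by
  rw [← Finset.sum_product']
  refine Finset.sum_involution (fun a _ => (a.2, a.1)) ?_ ?_ ?_ ?_
  · rintro ⟨a, b⟩ _
    by_cases h : a = b
    · subst h; simp [h1]
    · simp [h2 a b h]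
  · rintro ⟨a, b⟩ _ h h'
    simp only [Prod.mk.injEq] at h'
    apply h; simp only; rw [h'.1]; exact h1 _
  · simp
  · simp

variable [Fintype ι]

/-- Cech-type differential. -/
def dd (ord : ι → ℕ) : (Finset ι → M) →ₗ[R] (Finset ι → M) := ∑ i, ee R ord i

variable {R} in
/-- Koszul differential. -/
def kk (ord : ι → ℕ) (f : ι → R) : (Finset ι → M) →ₗ[R] (Finset ι → M) := ∑ i, f i • hh R ord i

lemma dd_eq (ord : ι → ℕ) (c : Finset ι → M) : dd R ord c = ∑ i, ee R ord i c := by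
  simp [dd]

variable {R} in
lemma kk_eq (ord : ι → ℕ) (f : ι → R) (c : Finset ι → M) :
    kk ord f c = ∑ i, f i • hh R ord i c := by
  simp [kk]

lemma dd_apply (ord : ι → ℕ) (c : Finset ι → M) (T : Finset ι) :
    dd R ord c T = ∑ i, ee R ord i c T := by
  simp [dd]

variable {R} in
lemma kk_apply (ord : ι → ℕ) (f : ι → R) (c : Finset ι → M) (T : Finset ι) :
    kk ord f c T = ∑ i, f i • hh R ord i c T := by
  simp [kk]

lemma dd_dd (ord : ι → ℕ) (hord : Function.Injective ord) (c : Finset ι → M) :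
    dd R ord (dd R ord c) = 0 := by
  rw [dd_eq, dd_eq]
  simp only [map_sum]
  exact sum_anti _ (fun i => ee_ee_self R ord i c) (fun i j h => ee_ee R ord hord i j h c)

variable {R} in
lemma kk_kk (ord : ι → ℕ) (hord : Function.Injective ord) (f : ι → R) (c : Finset ι → M) :
    kk ord f (kk ord f c) = 0 := by
  rw [kk_eq, kk_eq]
  simp only [map_sum, map_smul, Finset.smul_sum]
  refine sum_anti _ (fun i => ?_) (fun i j h => ?_)
  · rw [hh_hh_self]; simp
  · rw [hh_hh R ord hord i j h, smul_neg, smul_neg, smul_comm]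

lemma dd_hh (ord : ι → ℕ) (hord : Function.Injective ord) (v : ι) (c : Finset ι → M) :
    dd R ord (hh R ord v c) + hh R ord v (dd R ord c) = c := by
  rw [dd_eq, dd_eq, map_sum, ← Finset.sum_add_distrib, Finset.sum_eq_single v]
  · exact ee_hh_self R ord v c
  · intro i _ hi
    rw [ee_hh R ord hord i v hi]; simp
  · simp

variable {R} in
lemma kk_ee (ord : ι → ℕ) (hord : Function.Injective ord) (f : ι → R) (v : ι) (c : Finset ι → M) :
    ee R ord v (kk ord f c) + kk ord f (ee R ord v c) = f v • c := by
  rw [kk_eq, kk_eq, map_sum, ← Finset.sum_add_distrib, Finset.sum_eq_single v]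
  · rw [map_smul, ← smul_add, ee_hh_self R ord v c]
  · intro i _ hi
    rw [map_smul, ee_hh R ord hord v i hi.symm]; simp
  · simp

variable {R} in
/-- Koszul differential commutes with linear maps on values. -/
lemma kk_map {M' : Type} [AddCommGroup M'] [Module R M'] (ord : ι → ℕ) (f : ι → R)
    (φ : M →ₗ[R] M') (c : Finset ι → M) (T : Finset ι) :
    kk ord f (fun U => φ (c U)) T = φ (kk ord f c T) := by
  simp only [kk_apply, map_sum, map_smul, hh_apply]
  congr 1; ext i; split_ifs <;> simp

variable {R} in
lemma kk_zero_of_card (ord : ι → ℕ) (f : ι → R) (c : Finset ι → M) (q : ℕ)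
    (hc : ∀ U, c U ≠ 0 → U.card = q + 1) (U : Finset ι) (hU : kk ord f c U ≠ 0) : U.card = q := by
  rw [kk_apply] at hU
  obtain ⟨i, _, hi⟩ := Finset.exists_ne_zero_of_sum_ne_zero hU
  have hi := right_ne_zero_of_smul hi
  rw [hh_apply] at hi
  by_cases h : i ∉ U
  · rw [if_pos h] at hi
    have := hc _ (right_ne_zero_of_smul hi)
    rw [Finset.card_insert_of_notMem h] at this; omega
  · rw [if_neg h] at hi; exact absurd rfl hi

end FinsetOps


section RowComb

variable {σ : Type} [DecidableEq σ] [Fintype σ] (R : Type) [CommRing R]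

/-- Admissible sets: those meeting both parts. -/
def Adm (Xs Ys T : Finset σ) : Prop := (∃ x ∈ Xs, x ∈ T) ∧ (∃ y ∈ Ys, y ∈ T)

lemma hh_ne_zero (ord : σ → ℕ) (v : σ) (c : Finset σ → R) (T : Finset σ)
    (h : hh R ord v c T ≠ 0) : v ∉ T ∧ c (insert v T) ≠ 0 := by
  rw [hh_apply] at h
  by_cases hv : v ∉ T
  · rw [if_pos hv] at h
    exact ⟨hv, right_ne_zero_of_smul h⟩
  · rw [if_neg hv] at h; exact absurd rfl h

lemma dd_ne_zero {M : Type} [AddCommGroup M] [Module R M] (ord : σ → ℕ) (c : Finset σ → M)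
    (T : Finset σ)
    (h : dd R ord c T ≠ 0) : ∃ i ∈ T, c (T.erase i) ≠ 0 := by
  rw [dd_apply] at h
  obtain ⟨i, _, hi⟩ := Finset.exists_ne_zero_of_sum_ne_zero h
  rw [ee_apply] at hi
  by_cases hv : i ∈ T
  · rw [if_pos hv] at hi
    exact ⟨i, hv, right_ne_zero_of_smul hi⟩
  · rw [if_neg hv] at hi; exact absurd rfl hi

variable {R} in
lemma row_easy (ord : σ → ℕ) (hord : Function.Injective ord) (Xs Ys N : Finset σ)
    (hdisj : Disjoint Xs Ys) (hun : ∀ i, i ∈ Xs ∨ i ∈ Ys) (p : ℕ)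
    (c : Finset σ → R) (hc : ∀ T, c T ≠ 0 → Adm Xs Ys T ∧ T.card = p + 1 ∧ N ⊆ T)
    (hd : dd R ord c = 0) (hXN : Xs ⊆ N) (w : σ) (hw : w ∈ Ys) (hwN : w ∉ N)
    (h1 : ¬ (N = Xs ∧ p = Xs.card)) :
    ∃ b : Finset σ → R, (∀ T, b T ≠ 0 → Adm Xs Ys T ∧ T.card = p ∧ N ⊆ T) ∧ dd R ord b = c := by
  refine ⟨hh R ord w c, ?_, ?_⟩
  · intro T hT
    obtain ⟨hwT, hT⟩ := hh_ne_zero R _ _ _ _ hT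
    obtain ⟨⟨⟨x, hx, hxT⟩, -⟩, hcard, hNT⟩ := hc _ hT
    have hNT' : N ⊆ T := (Finset.subset_insert_iff_of_notMem hwN).mp hNT
    have hcT : T.card = p := by
      rw [Finset.card_insert_of_notMem hwT] at hcard; omega
    refine ⟨⟨⟨x, hx, ?_⟩, ?_⟩, hcT, hNT'⟩
    · rcases Finset.mem_insert.mp hxT with rfl | h
      · exact absurd hw (Finset.disjoint_left.mp hdisj hx)
      · exact h
    · by_contra hcon
      push Not at hcon
      have hTX : T ⊆ Xs := fun i hi => (hun i).resolve_right (fun h => hcon i h hi)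
      have e1 : N = Xs := (hNT'.trans hTX).antisymm hXN
      have e2 : T = Xs := hTX.antisymm (hXN.trans hNT')
      exact h1 ⟨e1, by rw [← hcT, e2]⟩
  · have := dd_hh R ord hord w c
    rwa [hd, map_zero, add_zero] at this

lemma Adm_comm (Xs Ys T : Finset σ) : Adm Xs Ys T ↔ Adm Ys Xs T := and_comm

variable {R} in
lemma row_ge2 (ord : σ → ℕ) (hord : Function.Injective ord) (Xs Ys N : Finset σ)
    (hdisj : Disjoint Xs Ys) (hun : ∀ i, i ∈ Xs ∨ i ∈ Ys) (p : ℕ)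
    (c : Finset σ → R) (hc : ∀ T, c T ≠ 0 → Adm Xs Ys T ∧ T.card = p + 1 ∧ N ⊆ T)
    (hd : dd R ord c = 0)
    (h1 : ¬ (N = Xs ∧ p = Xs.card)) (h2 : ¬ (N = Ys ∧ p = Ys.card))
    (h3 : ¬ (N = Finset.univ ∧ p + 1 = Fintype.card σ)) (hp : 2 ≤ p ∨ Xs ⊆ N ∨ Ys ⊆ N) :
    ∃ b : Finset σ → R, (∀ T, b T ≠ 0 → Adm Xs Ys T ∧ T.card = p ∧ N ⊆ T) ∧ dd R ord b = c := by
  by_cases hX : Xs ⊆ N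
  · by_cases hY : Ys ⊆ N
    · have hN : N = Finset.univ := by
        ext i; simp only [Finset.mem_univ, iff_true]
        rcases hun i with h | h
        · exact hX h
        · exact hY h
      refine ⟨0, by simp, ?_⟩
      rw [map_zero]
      ext T
      by_contra hT
      obtain ⟨-, hcard, hNT⟩ := hc T (fun h => hT (by simp [h]))
      rw [hN, Finset.univ_subset_iff] at hNT
      rw [hNT] at hcard
      exact h3 ⟨hN, by rw [← hcard]; rfl⟩
    · obtain ⟨w, hw, hwN⟩ := Finset.not_subset.mp hY
      exact row_easy ord hord Xs Ys N hdisj hun p c hc hd hX w hw hwN h1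
  · obtain ⟨v, hv, hvN⟩ := Finset.not_subset.mp hX
    by_cases hY : Ys ⊆ N
    · obtain ⟨b, hb, hb'⟩ := row_easy ord hord Ys Xs N hdisj.symm (fun i => (hun i).symm) p c
        (fun T hT => by rw [Adm_comm]; exact hc T hT) hd hY v hv hvN h2
      exact ⟨b, fun T hT => by rw [Adm_comm]; exact hb T hT, hb'⟩
    · obtain ⟨w, hw, hwN⟩ := Finset.not_subset.mp hY
      have hp : 2 ≤ p := by tauto
      set b := hh R ord v c with hb
      have hdb : dd R ord b = c := by
        have := dd_hh R ord hord v c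
        rwa [hd, map_zero, add_zero] at this
      have hbT : ∀ T, b T ≠ 0 → v ∉ T ∧ Adm Xs Ys (insert v T) ∧ T.card = p ∧ N ⊆ T := by
        intro T hT
        obtain ⟨hvT, hT⟩ := hh_ne_zero R _ _ _ _ hT
        obtain ⟨ha, hcard, hNT⟩ := hc _ hT
        rw [Finset.card_insert_of_notMem hvT] at hcard
        exact ⟨hvT, ha, by omega, (Finset.subset_insert_iff_of_notMem hvN).mp hNT⟩
      classical
      let b0 : Finset σ → R := fun T => if T ⊆ Ys then b T else 0
      have hb0 : ∀ T, b0 T ≠ 0 → T ⊆ Ys ∧ b T ≠ 0 := by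
        intro T hT
        by_cases h : T ⊆ Ys
        · simp only [b0, if_pos h] at hT; exact ⟨h, hT⟩
        · simp only [b0, if_neg h] at hT; exact absurd rfl hT
      have hddb0 : ∀ T, T ⊆ Ys → dd R ord b0 T = 0 := by
        intro T hT
        have : dd R ord b0 T = dd R ord b T := by
          rw [dd_apply, dd_apply]
          refine Finset.sum_congr rfl fun i _ => ?_
          rw [ee_apply, ee_apply]
          simp only [b0, if_pos ((Finset.erase_subset i T).trans hT)]
        rw [this, hdb]
        by_contra hne
        obtain ⟨⟨⟨x, hx, hxT⟩, -⟩, -⟩ := hc T hne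
        exact Finset.disjoint_left.mp hdisj hx (hT hxT)
      refine ⟨b - dd R ord (hh R ord w b0), ?_, ?_⟩
      swap
      · rw [map_sub, dd_dd R ord hord, sub_zero, hdb]
      have hrew : b - dd R ord (hh R ord w b0) = (b - b0) + hh R ord w (dd R ord b0) := by
        have := dd_hh R ord hord w b0
        rw [eq_sub_of_add_eq this]; abel
      intro T hT
      rw [hrew, Pi.add_apply] at hT
      by_cases hA : (b - b0) T = 0
      · rw [hA, zero_add] at hT
        obtain ⟨hwT, hT⟩ := hh_ne_zero R _ _ _ _ hT
        have hTY : ¬ insert w T ⊆ Ys := fun h => hT (hddb0 _ h)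
        obtain ⟨i, hi, hT⟩ := dd_ne_zero R _ _ _ hT
        obtain ⟨hsub, hne⟩ := hb0 _ hT
        obtain ⟨-, -, hcard, hN⟩ := hbT _ hne
        have hcT : T.card = p := by
          rw [Finset.card_erase_of_mem hi, Finset.card_insert_of_notMem hwT] at hcard; omega
        have hTY' : ¬ T ⊆ Ys := fun h => hTY (Finset.insert_subset hw h)
        refine ⟨⟨?_, ?_⟩, hcT, ?_⟩
        · obtain ⟨x, hx, hxY⟩ := Finset.not_subset.mp hTY'
          exact ⟨x, (hun x).resolve_right hxY, hx⟩
        · have : (T.erase i).Nonempty := by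
            rw [← Finset.card_pos]
            have := Finset.pred_card_le_card_erase (s := T) (a := i)
            omega
          obtain ⟨y, hy⟩ := this
          exact ⟨y, hsub (Finset.erase_subset_erase _ (Finset.subset_insert _ _) hy),
            Finset.mem_of_mem_erase hy⟩
        · exact (Finset.subset_insert_iff_of_notMem hwN).mp (hN.trans (Finset.erase_subset _ _))
      · have hTY : ¬ T ⊆ Ys := fun h => hA (by simp [b0, h])
        have hbne : b T ≠ 0 := by
          simpa [b0, hTY] using hA
        obtain ⟨hvT, ⟨-, y, hy, hyT⟩, hcard, hN⟩ := hbT _ hbne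
        refine ⟨⟨?_, ⟨y, hy, ?_⟩⟩, hcard, hN⟩
        · obtain ⟨x, hx, hxY⟩ := Finset.not_subset.mp hTY
          exact ⟨x, (hun x).resolve_right hxY, hx⟩
        · rcases Finset.mem_insert.mp hyT with rfl | h
          · exact absurd hy (Finset.disjoint_left.mp hdisj hv)
          · exact h

open Classical in
/-- The cochain equal to `s` on singletons of `Ys`. -/
def ysing {M : Type} [AddCommGroup M] (Ys : Finset σ) (s : M) : Finset σ → M :=
  fun T => if ∃ y ∈ Ys, T = {y} then s else 0

lemma ysing_ne_zero {M : Type} [AddCommGroup M] {Ys : Finset σ} {s : M} {T : Finset σ}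
    (h : ysing Ys s T ≠ 0) : s ≠ 0 ∧ ∃ y ∈ Ys, T = {y} := by
  unfold ysing at h
  by_cases h' : ∃ y ∈ Ys, T = {y}
  · rw [if_pos h'] at h; exact ⟨h, h'⟩
  · rw [if_neg h'] at h; exact absurd rfl h

lemma ysing_sing {M : Type} [AddCommGroup M] {Ys : Finset σ} {s : M} {y : σ} (hy : y ∈ Ys) :
    ysing Ys s {y} = s := by
  unfold ysing
  rw [if_pos ⟨y, hy, rfl⟩]

variable {R} in
lemma dd_pair {M : Type} [AddCommGroup M] [Module R M] (ord : σ → ℕ) (c : Finset σ → M) (x y : σ)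
    (hxy : x ≠ y) : dd R ord c {x, y} =
      sg ord x {x, y} • c {y} + sg ord y {x, y} • c {x} := by
  rw [dd_apply]
  have : ∀ i, i ≠ x → i ≠ y → ee R ord i c {x, y} = 0 := by
    intro i hi hi'
    rw [ee_apply, if_neg (by simp [hi, hi'])]
  rw [← Finset.sum_subset (Finset.subset_univ {x, y}), Finset.sum_pair hxy]
  · rw [ee_apply, ee_apply, if_pos (by simp), if_pos (by simp)]
    congr 3
    · rw [Finset.erase_insert (by simp [hxy])]
    · rw [Finset.pair_comm, Finset.erase_insert (by simp [hxy.symm])]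
  · intro i _ hi
    simp only [Finset.mem_insert, Finset.mem_singleton, not_or] at hi
    exact this i hi.1 hi.2

lemma sg_pair (ord : σ → ℕ) (hord : Function.Injective ord) (x y : σ) (hxy : x ≠ y) :
    sg ord x {x, y} = - sg ord y {x, y} := by
  have := sg_swap ord hord x y hxy ∅ (by simp) (by simp)
  have h0 : ∀ i, sg ord i ∅ = 1 := by intro i; simp [sg]
  rw [h0, h0, one_mul, one_mul] at this
  rw [sg_insert_self, Finset.pair_comm, sg_insert_self]
  simp only [insert_empty_eq] at this
  rw [this, neg_neg]

variable {R} in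
lemma dd_ysing_ne_zero {M : Type} [AddCommGroup M] [Module R M] (ord : σ → ℕ)
    (hord : Function.Injective ord) (Xs Ys : Finset σ)
    (hun : ∀ i, i ∈ Xs ∨ i ∈ Ys) (s : M) (T : Finset σ)
    (h : dd R ord (ysing Ys s) T ≠ 0) : s ≠ 0 ∧ Adm Xs Ys T ∧ T.card = 2 := by
  obtain ⟨x, hx, h'⟩ := dd_ne_zero R _ _ _ h
  obtain ⟨hs, y, hy, hT⟩ := ysing_ne_zero h'
  have hT' : T = {x, y} := by rw [← Finset.insert_erase hx, hT]
  have hxy : x ≠ y := by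
    rintro rfl
    have : x ∈ T.erase x := by rw [hT]; simp
    simp at this
  refine ⟨hs, ⟨?_, y, hy, by simp [hT']⟩, by rw [hT']; exact Finset.card_pair hxy⟩
  refine ⟨x, ?_, by simp [hT']⟩
  by_contra hxX
  have hxY := (hun x).resolve_left hxX
  apply h
  rw [hT', dd_pair ord _ x y hxy, ysing_sing hy, ysing_sing hxY, sg_pair ord hord x y hxy, neg_smul,
    neg_add_cancel]

variable {R} in
lemma row_one (ord : σ → ℕ) (hord : Function.Injective ord) (Xs Ys N : Finset σ)
    (hdisj : Disjoint Xs Ys) (hun : ∀ i, i ∈ Xs ∨ i ∈ Ys)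
    (c : Finset σ → R) (hc : ∀ T, c T ≠ 0 → Adm Xs Ys T ∧ T.card = 2 ∧ N ⊆ T)
    (hd : dd R ord c = 0)
    (h1 : ¬ (N = Xs ∧ 1 = Xs.card)) (h2 : ¬ (N = Ys ∧ 1 = Ys.card))
    (h3 : ¬ (N = Finset.univ ∧ 2 = Fintype.card σ)) :
    ∃ s : R, (N.Nonempty → s = 0) ∧ dd R ord (ysing Ys s) = c := by
  by_cases hXY : Xs ⊆ N ∨ Ys ⊆ N
  · obtain ⟨b, hb, hb'⟩ := row_ge2 ord hord Xs Ys N hdisj hun 1 c hc hd h1 h2 h3 (Or.inr hXY)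
    have hb0 : b = 0 := by
      ext T
      by_contra hT
      obtain ⟨⟨⟨x, hx, hxT⟩, y, hy, hyT⟩, hcard, -⟩ := hb T hT
      obtain ⟨z, rfl⟩ := Finset.card_eq_one.mp hcard
      simp only [Finset.mem_singleton] at hxT hyT
      subst hxT; subst hyT
      exact Finset.disjoint_left.mp hdisj hx hy
    refine ⟨0, fun _ => rfl, ?_⟩
    rw [← hb', hb0]
    congr 1
    ext T; simp [ysing]
  · push Not at hXY
    obtain ⟨v, hv, hvN⟩ := Finset.not_subset.mp hXY.1
    obtain ⟨w, hw, hwN⟩ := Finset.not_subset.mp hXY.2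
    set b := hh R ord v c with hb
    have hdb : dd R ord b = c := by
      have := dd_hh R ord hord v c
      rwa [hd, map_zero, add_zero] at this
    have hbT : ∀ T, b T ≠ 0 → (∃ y ∈ Ys, T = {y}) ∧ N ⊆ T := by
      intro T hT
      obtain ⟨hvT, hT⟩ := hh_ne_zero R _ _ _ _ hT
      obtain ⟨⟨-, y, hy, hyT⟩, hcard, hNT⟩ := hc _ hT
      rw [Finset.card_insert_of_notMem hvT] at hcard
      refine ⟨⟨y, hy, ?_⟩, (Finset.subset_insert_iff_of_notMem hvN).mp hNT⟩
      obtain ⟨z, rfl⟩ := Finset.card_eq_one.mp (show T.card = 1 by omega)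
      rcases Finset.mem_insert.mp hyT with rfl | h
      · exact absurd hy (Finset.disjoint_left.mp hdisj hv)
      · rw [Finset.mem_singleton.mp h]
    refine ⟨b {w}, ?_, ?_⟩
    · rintro ⟨z, hz⟩
      by_contra hne
      have := (hbT _ hne).2 hz
      rw [Finset.mem_singleton] at this
      exact hwN (this ▸ hz)
    · rw [← hdb]
      congr 1
      ext T
      unfold ysing
      split_ifs with h
      · obtain ⟨y, hy, rfl⟩ := h
        by_cases hyw : y = w
        · rw [hyw]
        have h0 : dd R ord b {y, w} = 0 := by
          rw [hdb]
          by_contra hne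
          obtain ⟨⟨⟨x, hx, hxT⟩, -⟩, -⟩ := hc _ hne
          simp only [Finset.mem_insert, Finset.mem_singleton] at hxT
          rcases hxT with rfl | rfl
          · exact Finset.disjoint_left.mp hdisj hx hy
          · exact Finset.disjoint_left.mp hdisj hx hw
        rw [dd_pair ord b y w hyw, sg_pair ord hord y w hyw, neg_smul, neg_add_eq_sub,
          ← smul_sub] at h0
        have := congrArg (fun t => sg ord w {y, w} • t) h0
        simp only [smul_smul, sg_mul_self, one_smul, smul_zero] at this
        exact (sub_eq_zero.mp this).symm
      · by_contra hne
        exact h (hbT T (fun h' => hne h'.symm)).1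

end RowComb


section Grade

variable {ι : Type} [DecidableEq ι] [Fintype ι] {S : Type} [CommRing S]

lemma ee_card {M : Type} [AddCommGroup M] [Module S M] (ord : ι → ℕ) (i : ι) (c : Finset ι → M)
    (q : ℕ) (hc : ∀ U, c U ≠ 0 → U.card = q) (U : Finset ι) (hU : ee S ord i c U ≠ 0) :
    U.card = q + 1 := by
  rw [ee_apply] at hU
  by_cases h : i ∈ U
  · rw [if_pos h] at hU
    have := hc _ (right_ne_zero_of_smul hU)
    rw [Finset.card_erase_of_mem h] at this
    have := Finset.card_pos.mpr ⟨i, h⟩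
    omega
  · rw [if_neg h] at hU; exact absurd rfl hU

lemma koszul_kill {M : Type} [AddCommGroup M] [Module S M] (ord : ι → ℕ)
    (hord : Function.Injective ord) (f : ι → S) (a : S) (ha : a ∈ Ideal.span (Set.range f))
    (q : ℕ) (z : Finset ι → M) (hz : ∀ U, z U ≠ 0 → U.card = q) (hk : kk ord f z = 0) :
    ∃ w : Finset ι → M, (∀ U, w U ≠ 0 → U.card = q + 1) ∧ kk ord f w = a • z := by
  obtain ⟨c, rfl⟩ := Ideal.mem_span_range_iff_exists_fun.mp ha
  refine ⟨∑ i, c i • ee S ord i z, ?_, ?_⟩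
  · intro U hU
    rw [Finset.sum_apply] at hU
    obtain ⟨i, _, hi⟩ := Finset.exists_ne_zero_of_sum_ne_zero hU
    exact ee_card ord i z q hz U (right_ne_zero_of_smul hi)
  · rw [map_sum, Finset.sum_smul]
    refine Finset.sum_congr rfl fun i _ => ?_
    have := kk_ee ord hord f i z
    rw [hk, map_zero, zero_add] at this
    rw [map_smul, this, smul_smul]

open RingTheory.Sequence in
lemma koszul_torsion (ord : ι → ℕ) (hord : Function.Injective ord) (f : ι → S) (g : S)
    (gs : List S) : ∀ (M : Type) [AddCommGroup M] [Module S M], IsWeaklyRegular M gs →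
    (∀ G ∈ gs, ∃ N : ℕ, g ^ N * G ∈ Ideal.span (Set.range f)) →
    ∀ q, Fintype.card ι < q + gs.length → ∀ z : Finset ι → M, (∀ U, z U ≠ 0 → U.card = q) →
      kk ord f z = 0 → ∃ (N : ℕ) (v : Finset ι → M), (∀ U, v U ≠ 0 → U.card = q + 1) ∧
        kk ord f v = g ^ N • z := by
  induction gs with
  | nil =>
    intro M _ _ _ _ q hq z hz _
    refine ⟨0, 0, by simp, ?_⟩
    have : z = 0 := by
      ext U
      by_contra hU
      have h1 := hz U hU
      have h2 := Finset.card_le_univ U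
      simp at hq
      omega
    simp [this]
  | cons G gs ih =>
    intro M _ _ hreg hG q hq z hz hk
    rw [isWeaklyRegular_cons_iff] at hreg
    obtain ⟨hr1, hr2⟩ := hreg
    obtain ⟨N, hN⟩ := hG G (by simp)
    obtain ⟨w, hw, hw'⟩ := koszul_kill ord hord f _ hN q z hz hk
    let π : M →ₗ[S] QuotSMulTop G M := Submodule.mkQ _
    have hπ : ∀ m : M, π (G • m) = 0 := fun m => by
      simp only [π, Submodule.mkQ_apply, Submodule.Quotient.mk_eq_zero]
      exact Submodule.smul_mem_pointwise_smul _ _ _ trivial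
    have hπ' : ∀ m : M, π m = 0 → ∃ m', m = G • m' := fun m hm => by
      simp only [π, Submodule.mkQ_apply, Submodule.Quotient.mk_eq_zero] at hm
      obtain ⟨m', -, h⟩ := (Submodule.mem_smul_pointwise_iff_exists _ _ _).mp hm
      exact ⟨m', h.symm⟩
    obtain ⟨N', u, hu, hu'⟩ := ih (QuotSMulTop G M) hr2 (fun G' h => hG G' (by simp [h])) (q + 1)
      (by simp at hq; omega) (fun U => π (w U))
      (fun U hU => hw U (fun h => hU (by simp [h])))
      (by
        ext U
        rw [kk_map, hw']
        simp only [Pi.smul_apply, Pi.zero_apply]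
        rw [mul_comm, mul_smul]; exact hπ _)
    have hlift : ∀ U, ∃ m : M, π m = u U ∧ (m ≠ 0 → u U ≠ 0) := by
      intro U
      by_cases h : u U = 0
      · exact ⟨0, by simp [h], by simp⟩
      · obtain ⟨m, hm⟩ := Submodule.mkQ_surjective _ (u U)
        exact ⟨m, hm, fun _ => h⟩
    choose u' hu1 hu2 using hlift
    have hdiff : ∀ U, ∃ m, (g ^ N' • w - kk ord f u') U = G • m ∧
        (m ≠ 0 → (g ^ N' • w - kk ord f u') U ≠ 0) := by
      intro U
      by_cases h : (g ^ N' • w - kk ord f u') U = 0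
      · exact ⟨0, by simp [h], by simp⟩
      · have : π ((g ^ N' • w - kk ord f u') U) = 0 := by
          rw [Pi.sub_apply, map_sub, ← kk_map]
          have : (fun U => π (u' U)) = u := funext hu1
          rw [this, hu']
          simp
        obtain ⟨m, hm⟩ := hπ' _ this
        exact ⟨m, hm, fun _ => h⟩
    choose v hv1 hv2 using hdiff
    refine ⟨N' + N, v, ?_, ?_⟩
    · intro U hU
      have := hv2 U hU
      by_cases h : w U = 0
      · have h2 : kk ord f u' U ≠ 0 := by
          intro h3; apply this; simp [h, h3]
        exact kk_zero_of_card ord f u' (q + 1) (fun U hU => hu U (hu2 U hU)) U h2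
      · exact hw U h
    · have e1 : G • v = g ^ N' • w - kk ord f u' := by
        ext U; rw [hv1]; rfl
      have e2 : G • kk ord f v = G • (g ^ (N' + N) • z) := by
        rw [← map_smul, e1, map_sub, map_smul, kk_kk ord hord, sub_zero, hw', smul_smul, smul_smul]
        congr 1; ring
      ext U
      exact hr1 (congrFun e2 U)

end Grade

section Monic
open RingTheory.Sequence

variable {k : Type} [Field k] {σ : Type}

/-- A polynomial with a hom to one-variable polynomials that makes it monic. -/
lemma monic_regular [DecidableEq σ] (J : Ideal (MvPolynomial σ k)) (l : σ) (G : MvPolynomial σ k)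
    (hJ : ∃ s : Set (MvPolynomial σ k), J = Ideal.span s ∧ ∀ p ∈ s, l ∉ p.vars)
    (D : ℕ) (a : ℕ → MvPolynomial σ k) (ha : ∀ t, l ∉ (a t).vars)
    (hG : G = X l ^ D + ∑ t ∈ Finset.range D, a t * X l ^ t) (u : MvPolynomial σ k)
    (hu : G * u ∈ J) : u ∈ J := by
  obtain ⟨s, rfl, hs⟩ := hJ
  set J := Ideal.span s
  let A := MvPolynomial σ k ⧸ J
  let φ : MvPolynomial σ k →ₐ[k] Polynomial A :=
    aeval (fun i => if i = l then Polynomial.X else Polynomial.C (Ideal.Quotient.mk J (X i)))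
  have hφ : ∀ p : MvPolynomial σ k, l ∉ p.vars → φ p = Polynomial.C (Ideal.Quotient.mk J p) := by
    intro p hp
    let ψ : MvPolynomial σ k →ₐ[k] Polynomial A :=
      Polynomial.CAlgHom.comp (Ideal.Quotient.mkₐ k J)
    have h2 : ψ = aeval (fun i => Polynomial.C (Ideal.Quotient.mk J (X i))) := by
      ext i : 1
      rw [aeval_X]; rfl
    have : φ p = ψ p := by
      rw [h2]
      refine eval₂Hom_congr' rfl ?_ rfl
      intro i hi _
      have hil : i ≠ l := by rintro rfl; exact hp hi
      simp only [if_neg hil]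
    rw [this]; rfl
  have hφJ : ∀ p ∈ J, φ p = 0 := by
    intro p hp
    have : J ≤ RingHom.ker φ.toRingHom := by
      rw [Ideal.span_le]
      intro p hp
      have := hφ p (hs p hp)
      rw [(Ideal.Quotient.eq_zero_iff_mem).mpr (Ideal.subset_span hp), Polynomial.C_0] at this
      exact this
    exact this hp
  have hmonic : (φ G).Monic := by
    have : φ G = Polynomial.X ^ D + ∑ t ∈ Finset.range D,
        Polynomial.C (Ideal.Quotient.mk J (a t)) * Polynomial.X ^ t := by
      rw [hG]
      simp only [map_add, map_pow, map_sum, map_mul, hφ _ (ha _)]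
      simp [φ]
    rw [this]
    apply Polynomial.monic_X_pow_add
    refine (Polynomial.degree_sum_le _ _).trans_lt ?_
    refine (Finset.sup_lt_iff (WithBot.bot_lt_coe D)).mpr ?_
    intro t ht
    refine (Polynomial.degree_C_mul_X_pow_le _ _).trans_lt ?_
    exact WithBot.coe_lt_coe.mpr (Finset.mem_range.mp ht)
  have h0 : φ u = 0 := by
    have := hφJ _ hu
    rw [map_mul] at this
    exact (hmonic.mul_right_eq_zero_iff).mp this
  have hev : (Polynomial.aeval (R := A) (Ideal.Quotient.mk J (X l)) (φ u)) = Ideal.Quotient.mk J u := by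
    let χ : MvPolynomial σ k →ₐ[k] A :=
      ((Polynomial.aeval (R := A) (Ideal.Quotient.mk J (X l))).restrictScalars k).comp φ
    have : χ = Ideal.Quotient.mkₐ k J := by
      ext i
      simp only [χ, φ, AlgHom.comp_apply, aeval_X]
      by_cases h : i = l
      · subst h; simp; rfl
      · simp [h]; rfl
    exact congrArg (fun F : MvPolynomial σ k →ₐ[k] A => F u) this
  rw [h0, map_zero] at hev
  exact Ideal.Quotient.eq_zero_iff_mem.mp hev.symm

/-- data: a monic polynomial in `X l` whose other variables avoid a given set -/
structure MonicIn (σ k : Type) [Field k] (bad : σ → Prop) (l : σ) (G : MvPolynomial σ k) : Prop where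
  ex : ∃ (D : ℕ) (a : ℕ → MvPolynomial σ k), (∀ t, ∀ i ∈ (a t).vars, ¬ bad i) ∧
    G = X l ^ D + ∑ t ∈ Finset.range D, a t * X l ^ t

lemma MonicIn.vars_sub [DecidableEq σ] {bad : σ → Prop} {l : σ} {G : MvPolynomial σ k}
    (h : MonicIn σ k bad l G) (i : σ) (hi : i ∈ G.vars) : i = l ∨ ¬ bad i := by
  obtain ⟨D, a, ha, rfl⟩ := h.ex
  by_contra hcon
  push Not at hcon
  rcases Finset.mem_union.mp (vars_add_subset _ _ hi) with h | h
  · have := vars_pow _ _ h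
    rw [vars_X, Finset.mem_singleton] at this
    exact hcon.1 this
  · have := vars_sum_subset _ _ h
    rw [Finset.mem_biUnion] at this
    obtain ⟨t, _, ht⟩ := this
    rcases Finset.mem_union.mp (vars_mul _ _ ht) with h | h
    · exact ha t i h hcon.2
    · have := vars_pow _ _ h
      rw [vars_X, Finset.mem_singleton] at this
      exact hcon.1 this

lemma monic_list_regular [DecidableEq σ] (bad : σ → Prop) (ls : List σ) (hnd : ls.Nodup)
    (hbad : ∀ l ∈ ls, bad l) (G : σ → MvPolynomial σ k) (hG : ∀ l ∈ ls, MonicIn σ k bad l (G l)) :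
    IsWeaklyRegular (MvPolynomial σ k) (ls.map G) := by
  rw [isWeaklyRegular_iff]
  intro i hi
  have hi' : i < ls.length := by simpa using hi
  rw [isSMulRegular_iff_right_eq_zero_of_smul]
  intro x hx
  obtain ⟨u, rfl⟩ := Submodule.mkQ_surjective _ x
  rw [← map_smul] at hx
  rw [Submodule.mkQ_apply, Submodule.Quotient.mk_eq_zero] at hx ⊢
  simp only [Ideal.smul_top_eq_map, Ideal.map_id, Algebra.algebraMap_self] at hx ⊢
  simp only [List.getElem_map] at hx
  obtain ⟨D, a, ha, hGa⟩ := (hG ls[i] (List.getElem_mem _)).ex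
  refine monic_regular _ ls[i] (G ls[i]) ⟨{r | r ∈ (ls.map G).take i}, rfl, ?_⟩ D a
    (fun t h => ha t _ h (hbad _ (List.getElem_mem _))) hGa u (by simpa using hx)
  intro p hp hcon
  rw [← List.map_take, Set.mem_ofPred_eq, List.mem_map] at hp
  obtain ⟨l', hl', rfl⟩ := hp
  rcases (hG l' (List.mem_of_mem_take hl')).vars_sub _ hcon with h | h
  · obtain ⟨j, hj, hj'⟩ := List.mem_iff_getElem.mp hl'
    rw [List.length_take] at hj
    rw [List.getElem_take] at hj'
    have := (List.Nodup.getElem_inj_iff hnd).mp (hj'.trans h.symm)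
    omega
  · exact h (hbad _ (List.getElem_mem _))

end Monic


section KrullDim

lemma krull_of_integral {B C : Type} [CommRing B] [IsDomain B] [CommRing C] [IsDomain C] [Algebra B C]
    [Algebra.IsIntegral B C] (hinj : Function.Injective (algebraMap B C)) (N : ℕ)
    (h : (N : WithBot ℕ∞) ≤ ringKrullDim B) : (N : WithBot ℕ∞) ≤ ringKrullDim C := by
  obtain ⟨l, hl⟩ := Order.le_krullDim_iff.mp h
  have : FaithfulSMul B C := (faithfulSMul_iff_algebraMap_injective B C).mpr hinj
  obtain ⟨Q, -, hQ, hQ2⟩ := Ideal.exists_ideal_over_prime_of_isIntegral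
    (S := C) (RelSeries.head l).asIdeal ⊥ (by
      rw [← RingHom.ker_eq_comap_bot, (RingHom.injective_iff_ker_eq_bot _).mp hinj]; exact bot_le)
  have lo : Q.LiesOver (RelSeries.head l).asIdeal := ⟨hQ2.symm⟩
  obtain ⟨L, hL, -⟩ := Ideal.exists_ltSeries_of_hasGoingUp l Q
  exact Order.le_krullDim_iff.mpr ⟨L, hL.trans hl⟩

lemma krull_of_algInd_domain {k R : Type} [Field k] [CommRing R] [IsDomain R] [Algebra k R]
    [Algebra.FiniteType k R] {N : ℕ} (x : Fin N → R) (hx : AlgebraicIndependent k x) :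
    (N : WithBot ℕ∞) ≤ ringKrullDim R := by
  obtain ⟨s, g, hg, hi⟩ := exists_integral_inj_algHom_of_fg k R
  algebraize [g.toRingHom]
  have hI : Algebra.IsIntegral (MvPolynomial (Fin s) k) R := ⟨hi⟩
  have ht : IsScalarTower k (MvPolynomial (Fin s) k) R := IsScalarTower.of_algebraMap_eq (fun r => (g.commutes r).symm)
  have h1 := hx.cardinalMk_le_trdeg
  have hf : FaithfulSMul (MvPolynomial (Fin s) k) R := (faithfulSMul_iff_algebraMap_injective _ _).mpr hg
  have h2 : Algebra.trdeg k R = s := by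
    rw [← trdeg_add_eq (R := k) (S := MvPolynomial (Fin s) k) (A := R),
      MvPolynomial.trdeg_of_isDomain, trdeg_eq_zero]
    simp
  rw [h2] at h1
  have h3 : N ≤ s := by simpa using h1
  refine krull_of_integral (B := MvPolynomial (Fin s) k) hg N ?_
  rw [MvPolynomial.ringKrullDim_of_isNoetherianRing, ringKrullDim_eq_zero_of_field]
  simpa using h3

lemma krull_of_algInd {k R : Type} [Field k] [CommRing R] [Algebra k R]
    [Algebra.FiniteType k R] {N : ℕ} (x : Fin N → R) (hx : AlgebraicIndependent k x) :
    (N : WithBot ℕ∞) ≤ ringKrullDim R := by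
  have hinj := algebraicIndependent_iff_injective_aeval.mp hx
  obtain ⟨P, hP, hP2⟩ := Ideal.exists_comap_eq_of_mem_minimalPrimes_of_injective
    (f := (aeval x : MvPolynomial (Fin N) k →ₐ[k] R).toRingHom) hinj ⊥ (by simp [IsDomain.minimalPrimes_eq_singleton_bot])
  have h1 : AlgebraicIndependent k (fun i => Ideal.Quotient.mk P (x i)) := by
    rw [algebraicIndependent_iff]
    intro p hp
    have : (aeval fun i => Ideal.Quotient.mk P (x i)) p = Ideal.Quotient.mkₐ k P (aeval x p) := by
      rw [← AlgHom.comp_apply]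
      congr 1
      ext i; simp
    rw [this] at hp
    have h2 : aeval x p ∈ P := Ideal.Quotient.eq_zero_iff_mem.mp hp
    have h3 : p ∈ Ideal.comap (aeval x : MvPolynomial (Fin N) k →ₐ[k] R).toRingHom P := h2
    rw [hP2] at h3
    exact h3
  exact (krull_of_algInd_domain _ h1).trans (ringKrullDim_quotient_le P)

end KrullDim


section Dep

variable {k : Type} [Field k]

lemma satIdeal_torsion {n m : ℕ} (I C : Ideal (PolyS k n m)) (g : PolyS k n m) (hg : g ∈ C)
    (F : PolyS k n m) (hF : F ∈ satIdeal I C) : ∃ N : ℕ, g ^ N * F ∈ I := by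
  unfold satIdeal at hF
  induction hF using Submodule.iSup_induction' with
  | mem t x hx =>
    refine ⟨t, ?_⟩
    have := Submodule.mem_colon.mp hx (g ^ t) (Set.pow_mem_pow hg)
    rwa [smul_eq_mul, mul_comm] at this
  | zero => exact ⟨0, by simp⟩
  | add x y _ _ hx hy =>
    obtain ⟨N, hN⟩ := hx
    obtain ⟨M, hM⟩ := hy
    refine ⟨N + M, ?_⟩
    have : g ^ (N + M) * (x + y) = g ^ M * (g ^ N * x) + g ^ N * (g ^ M * y) := by ring
    rw [this]
    exact I.add_mem (I.mul_mem_left _ hN) (I.mul_mem_left _ hM)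

lemma comp_mem {σ : Type} (w : σ → ℤ × ℤ) {ι : Type} (f : ι → MvPolynomial σ k) (δ : ℤ × ℤ)
    (hf : ∀ i, IsWeightedHomogeneous w (f i) δ) (P : MvPolynomial σ k)
    (hP : P ∈ Ideal.span (Set.range f)) (γ : ℤ × ℤ) :
    weightedHomogeneousComponent w γ P ∈ Ideal.span (Set.range f) := by
  classical
  let _ := weightedGradedAlgebra k w
  have := Ideal.homogeneous_span (weightedHomogeneousSubmodule k w) (Set.range f) (by
    rintro _ ⟨i, rfl⟩
    exact ⟨δ, hf i⟩)
  exact weightedHomogeneousComponent_mem_of_mem _ _ this hP γ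

lemma monic_factor {σ : Type} [DecidableEq σ] (w : σ → ℤ × ℤ) (v0 l v2 : σ) (h0l : v0 ≠ l) (h2l : v2 ≠ l)
    (h02 : v0 ≠ v2) (hw : w l = w v0)
    (hind : ∀ a b a' b' : ℕ, a • w v0 + b • w v2 = a' • w v0 + b' • w v2 → a = a' ∧ b = b')
    (H : MvPolynomial σ k) (hH : H ≠ 0) (γ : ℤ × ℤ) (hhom : IsWeightedHomogeneous w H γ)
    (hvars : ∀ e ∈ H.support, ∀ i, e i ≠ 0 → i = v0 ∨ i = l ∨ i = v2)
    (bad : σ → Prop) (hbad : ¬ bad v0) :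
    ∃ (G : MvPolynomial σ k) (s t : ℕ) (h : k), h ≠ 0 ∧ H = C h * X v0 ^ s * X v2 ^ t * G ∧
      MonicIn σ k bad l G := by
  have hdec : ∀ e ∈ H.support, e = Finsupp.single v0 (e v0) + Finsupp.single l (e l) +
      Finsupp.single v2 (e v2) := by
    intro e he
    ext i
    simp only [Finsupp.add_apply, Finsupp.single_apply]
    by_cases i0 : v0 = i
    · subst i0; simp [h0l.symm, h02.symm]
    by_cases i1 : l = i
    · subst i1; simp [h0l, h2l]
    by_cases i2 : v2 = i
    · subst i2; simp [h02, h2l.symm]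
    rw [if_neg i0, if_neg i1, if_neg i2]
    by_contra hi
    rcases hvars e he i (by simpa using hi) with h | h | h
    · exact i0 h.symm
    · exact i1 h.symm
    · exact i2 h.symm
  have hwt : ∀ e ∈ H.support, (e v0 + e l) • w v0 + (e v2) • w v2 = γ := by
    intro e he
    have h1 := hhom (mem_support_iff.mp he)
    rw [hdec e he] at h1
    simp only [map_add, Finsupp.weight_single, hw] at h1
    rw [← h1, add_smul]
  obtain ⟨m0, hm0, hmax⟩ := Finset.exists_max_image H.support (fun e => e l)
    (Finset.nonempty_iff_ne_empty.mpr (by simpa using hH))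
  have hrel : ∀ e ∈ H.support, e v0 + e l = m0 v0 + m0 l ∧ e v2 = m0 v2 := fun e he =>
    hind _ _ _ _ ((hwt e he).trans (hwt m0 hm0).symm)
  set D := m0 l with hD
  set s := m0 v0 with hs
  set t := m0 v2 with ht
  set h := coeff m0 H with hh
  have hne : h ≠ 0 := mem_support_iff.mp hm0
  let E : ℕ → (σ →₀ ℕ) := fun b => Finsupp.single v0 (s + D - b) + Finsupp.single l b + Finsupp.single v2 t
  have hEl : ∀ b, E b l = b := by
    intro b; simp [E, Finsupp.single_apply, h0l, h2l]
  have hED : E D = m0 := by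
    rw [hdec m0 hm0]; simp [E, hD, hs, ht]
  have hsum : H = ∑ b ∈ Finset.range (D + 1), monomial (E b) (coeff (E b) H) := by
    conv_lhs => rw [H.as_sum]
    rw [← Finset.sum_image (s := Finset.range (D + 1)) (g := E) (f := fun e => monomial e (coeff e H))
      (fun a _ b _ hab => by rw [← hEl a, hab, hEl])]
    apply Finset.sum_subset
    · intro e he
      rw [Finset.mem_image]
      refine ⟨e l, Finset.mem_range.mpr (Nat.lt_succ_of_le (hmax e he)), ?_⟩
      have := hrel e he
      conv_rhs => rw [hdec e he]
      simp only [E]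
      rw [show s + D - e l = e v0 by omega, this.2]
    · intro e _ he
      rw [notMem_support_iff.mp he, map_zero]
  let a : ℕ → MvPolynomial σ k := fun b => C (coeff (E b) H / h) * X v0 ^ (D - b)
  refine ⟨X l ^ D + ∑ b ∈ Finset.range D, a b * X l ^ b, s, t, h, hne, ?_, ⟨D, a, ?_, rfl⟩⟩
  · conv_lhs => rw [hsum]
    have hmono : ∀ (b : ℕ) (c : k), (monomial (E b) c : MvPolynomial σ k) = C c * X v0 ^ (s + D - b) * X l ^ b * X v2 ^ t := by
      intro b c
      simp only [E]
      rw [X_pow_eq_monomial, X_pow_eq_monomial, X_pow_eq_monomial, C_mul_monomial, monomial_mul,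
        monomial_mul]
      simp
    rw [Finset.sum_range_succ, add_comm, mul_add, Finset.mul_sum, hED, ← hh]
    congr 1
    · rw [← hED, hmono]
      rw [Nat.add_sub_cancel]; ring
    · apply Finset.sum_congr rfl
      intro b hb
      have hb' := Finset.mem_range.mp hb
      rw [hmono, Nat.add_sub_assoc hb'.le, pow_add]
      simp only [a]
      have : (C (coeff (E b) H) : MvPolynomial σ k) = C h * C (coeff (E b) H / h) := by
        rw [← C_mul, mul_div_cancel₀ _ hne]
      rw [this]; ring
  · intro b i hi
    have h1 : i ∈ (X v0 ^ (D - b) : MvPolynomial σ k).vars := by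
      rcases Finset.mem_union.mp (vars_mul _ _ hi) with h | h
      · simp at h
      · exact h
    have h2 := vars_pow _ _ h1
    rw [vars_X, Finset.mem_singleton] at h2
    rw [h2]
    exact hbad

lemma dep_general {n m : ℕ} (f : Fin (n + m) → PolyS k n m) (δ : ℤ × ℤ)
    (hf : ∀ i, IsWeightedHomogeneous (wt n m) (f i) δ)
    (hdim : ringKrullDim (PolyS k n m ⧸ satIdeal (Ideal.span (Set.range f)) (Birr k n m)) = (2 : ℕ))
    (v0 l v2 : Fin (n+1) ⊕ Fin (m+1)) (h0l : v0 ≠ l) (h2l : v2 ≠ l)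
    (h02 : v0 ≠ v2) (hw : wt n m l = wt n m v0)
    (hind : ∀ a b a' b' : ℕ, a • wt n m v0 + b • wt n m v2 = a' • wt n m v0 + b' • wt n m v2 → a = a' ∧ b = b')
    (hB : X v0 * X v2 ∈ Birr k n m)
    (bad : Fin (n+1) ⊕ Fin (m+1) → Prop) (hbad : ¬ bad v0) :
    ∃ G, MonicIn _ k bad l G ∧ ∃ N, (X v0 * X v2) ^ N * G ∈ Ideal.span (Set.range f) := by
  set I := Ideal.span (Set.range f)
  let v : Fin 3 → Fin (n+1) ⊕ Fin (m+1) := ![v0, l, v2]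
  have hv : Function.Injective v := by
    intro a b; fin_cases a <;> fin_cases b <;> simp [v, h0l, h2l, h02, h0l.symm, h2l.symm, h02.symm]
  have hna : ¬ AlgebraicIndependent k (fun t => Ideal.Quotient.mk (satIdeal I (Birr k n m)) (X (v t))) := by
    intro hcon
    have := krull_of_algInd _ hcon
    rw [hdim] at this
    norm_cast at this
  rw [algebraicIndependent_iff] at hna
  push Not at hna
  obtain ⟨p, hp, hp0⟩ := hna
  have hF : rename v p ∈ satIdeal I (Birr k n m) := by
    rw [← Ideal.Quotient.eq_zero_iff_mem, ← hp]
    have : (aeval fun t => Ideal.Quotient.mk (satIdeal I (Birr k n m)) (X (v t)))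
        = (Ideal.Quotient.mkₐ k (satIdeal I (Birr k n m))).comp (rename v) := by
      ext i; simp
    rw [this]; rfl
  obtain ⟨N, hN⟩ := satIdeal_torsion _ _ _ hB _ hF
  set P := (X v0 * X v2) ^ N * rename v p with hP
  have hPr : P = rename v ((X 0 * X 2) ^ N * p) := by
    simp [hP, v]
  have hP0 : P ≠ 0 := by
    rw [hP]
    refine mul_ne_zero (pow_ne_zero _ (mul_ne_zero (X_ne_zero _) (X_ne_zero _))) ?_
    rw [Ne, map_eq_zero_iff _ (rename_injective v hv)]
    exact hp0
  obtain ⟨e0, he0⟩ := Finset.nonempty_iff_ne_empty.mpr (fun h => hP0 (support_eq_empty.mp h))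
  classical
  set γ := Finsupp.weight (wt n m) e0
  set H := weightedHomogeneousComponent (wt n m) γ P with hHdef
  have hHI : H ∈ I := comp_mem _ f δ hf P hN γ
  have hH0 : H ≠ 0 := by
    intro h
    have := coeff_weightedHomogeneousComponent (w := wt n m) γ P e0
    rw [← hHdef, h, if_pos rfl, coeff_zero] at this
    exact mem_support_iff.mp he0 this.symm
  obtain ⟨G, s, t, h, hh, hHG, hG⟩ := monic_factor (wt n m) v0 l v2 h0l h2l h02 hw hind H hH0 γ
    (weightedHomogeneousComponent_isWeightedHomogeneous _ _) (by
      intro e he i hi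
      rw [hHdef, support_weightedHomogeneousComponent, Finset.mem_filter] at he
      have h1 : i ∈ P.vars := (mem_vars_iff_mem_support i).mpr ⟨e, he.1, by simpa using hi⟩
      rw [hPr] at h1
      have := vars_rename _ _ h1
      rw [Finset.mem_image] at this
      obtain ⟨a, _, rfl⟩ := this
      fin_cases a <;> simp [v]) bad hbad
  refine ⟨G, hG, s + t, ?_⟩
  have : (X v0 * X v2) ^ (s + t) * G = C h⁻¹ * X v0 ^ t * X v2 ^ s * H := by
    rw [hHG]
    have h1 : (C h⁻¹ * C h : PolyS k n m) = 1 := by rw [← C_mul, inv_mul_cancel₀ hh, C_1]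
    calc _ = 1 * ((X v0 * X v2) ^ (s + t) * G) := by ring
      _ = _ := by rw [← h1]; ring
  rw [this]
  exact I.mul_mem_left _ hHI

/-- Every Koszul cycle of positive degree is a boundary after multiplication by a power of `x_i y_j`. -/
lemma koszul_chart {n m : ℕ} (f : Fin (n + m) → PolyS k n m) (δ : ℤ × ℤ)
    (hf : ∀ i, IsWeightedHomogeneous (wt n m) (f i) δ)
    (hdim : ringKrullDim (PolyS k n m ⧸ satIdeal (Ideal.span (Set.range f)) (Birr k n m)) = (2 : ℕ))
    (ord : Fin (n + m) → ℕ) (hord : Function.Injective ord)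
    (i : Fin (n+1)) (j : Fin (m+1)) (q : ℕ) (hq : 1 ≤ q) (z : Finset (Fin (n+m)) → PolyS k n m)
    (hz : ∀ U, z U ≠ 0 → U.card = q) (hzk : kk ord f z = 0) :
    ∃ N : ℕ, ∃ v : Finset (Fin (n+m)) → PolyS k n m, (∀ U, v U ≠ 0 → U.card = q + 1) ∧
      kk ord f v = (X (Sum.inl i) * X (Sum.inr j) : PolyS k n m) ^ N • z := by
  let bad : Fin (n+1) ⊕ Fin (m+1) → Prop := fun v => v ≠ Sum.inl i ∧ v ≠ Sum.inr j
  have hB : (X (Sum.inl i) * X (Sum.inr j) : PolyS k n m) ∈ Birr k n m :=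
    Ideal.mul_mem_mul (Ideal.subset_span ⟨i, rfl⟩) (Ideal.subset_span ⟨j, rfl⟩)
  have key : ∀ l, bad l → ∃ G, MonicIn _ k bad l G ∧
      ∃ N, (X (Sum.inl i) * X (Sum.inr j)) ^ N * G ∈ Ideal.span (Set.range f) := by
    intro l hl
    rcases l with l | l
    · exact dep_general f δ hf hdim (Sum.inl i) (Sum.inl l) (Sum.inr j) hl.1.symm (by simp) (by simp) rfl
        (by intro a b a' b' h; simpa [wt] using h) hB bad (by simp [bad])
    · obtain ⟨G, h1, N, h2⟩ := dep_general f δ hf hdim (Sum.inr j) (Sum.inr l) (Sum.inl i) hl.2.symm (by simp) (by simp) rfl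
        (by intro a b a' b' h; simpa [wt, and_comm] using h) (by rw [mul_comm]; exact hB) bad (by simp [bad])
      exact ⟨G, h1, N, by rw [mul_comm (X (Sum.inl i))]; exact h2⟩
  choose! G hG hGN using key
  classical
  let ls : List (Fin (n+1) ⊕ Fin (m+1)) := (Finset.univ.filter bad).toList
  have hls : ∀ l ∈ ls, bad l := by
    intro l hl
    simpa [ls] using hl
  have hlen : ls.length = n + m := by
    rw [Finset.length_toList]
    have : Finset.univ.filter bad = (Finset.univ.erase (Sum.inl i)).erase (Sum.inr j) := by
      ext l; simp [bad, and_comm]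
    rw [this, Finset.card_erase_of_mem (by simp), Finset.card_erase_of_mem (by simp)]
    simp
  refine koszul_torsion ord hord f _ (ls.map G) (PolyS k n m)
    (monic_list_regular bad ls (Finset.nodup_toList _) hls G (fun l hl => hG l (hls l hl))) ?_ q ?_ z hz hzk
  · intro g hg
    obtain ⟨l, hl, rfl⟩ := List.mem_map.mp hg
    exact hGN l (hls l hl)
  · simp [hlen]; omega

end Dep


section Laurent

variable {k : Type} [Field k] {σ : Type} [DecidableEq σ] [Fintype σ]

/-- Laurent polynomials with exponents in `σ → ℤ`. -/
abbrev Lau (k : Type) [Field k] (σ : Type) := AddMonoidAlgebra k (σ → ℤ)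

/-- Exponent embedding. -/
def hemb (σ : Type) : (σ →₀ ℕ) →+ (σ → ℤ) where
  toFun s i := (s i : ℤ)
  map_zero' := by ext; simp
  map_add' s t := by ext; simp

lemma hemb_inj : Function.Injective (hemb σ) := by
  intro s t h
  ext i
  have := congrFun h i
  simpa [hemb] using this

/-- Embedding of polynomials into Laurent polynomials. -/
def phi (k : Type) [Field k] (σ : Type) : MvPolynomial σ k →+* Lau k σ :=
  AddMonoidAlgebra.mapDomainRingHom k (hemb σ)

lemma phi_coeff (p : MvPolynomial σ k) (s : σ →₀ ℕ) :
    (phi k σ p).coeff (hemb σ s) = MvPolynomial.coeff s p := by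
  change (AddMonoidAlgebra.mapDomain (hemb σ) p).coeff (hemb σ s) = _
  rw [AddMonoidAlgebra.coeff_mapDomain, Finsupp.mapDomain_apply hemb_inj]
  rfl

lemma phi_coeff_ne (p : MvPolynomial σ k) (g : σ → ℤ) (h : (phi k σ p).coeff g ≠ 0) :
    ∃ s, hemb σ s = g ∧ MvPolynomial.coeff s p ≠ 0 := by
  by_cases hg : g ∈ Set.range (hemb σ)
  · obtain ⟨s, rfl⟩ := hg
    exact ⟨s, rfl, by rwa [phi_coeff] at h⟩
  · exfalso; apply h
    change (AddMonoidAlgebra.mapDomain (hemb σ) p).coeff g = _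
    rw [AddMonoidAlgebra.coeff_mapDomain, Finsupp.mapDomain_of_notMem_range _ _ hg]

lemma lau_ext {a b : Lau k σ} (h : ∀ g, a.coeff g = b.coeff g) : a = b := by
  ext g; exact h g

lemma lau_ne {a : Lau k σ} (h : a ≠ 0) : ∃ g, a.coeff g ≠ 0 := by
  by_contra! h'
  exact h (lau_ext (by simpa using h'))

lemma phi_inj : Function.Injective (phi k σ) := by
  intro p q h
  ext s
  rw [← phi_coeff, ← phi_coeff, h]

lemma phi_surj (a : Lau k σ) (h : ∀ g, a.coeff g ≠ 0 → ∀ i, 0 ≤ g i) : ∃ p, phi k σ p = a := by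
  refine ⟨∑ g ∈ a.coeff.support, monomial (Finsupp.equivFunOnFinite.symm fun i => (g i).toNat)
    (a.coeff g), ?_⟩
  rw [map_sum]
  have : ∀ g ∈ a.coeff.support, phi k σ (monomial (Finsupp.equivFunOnFinite.symm
      fun i => (g i).toNat) (a.coeff g)) = AddMonoidAlgebra.single g (a.coeff g) := by
    intro g hg
    change AddMonoidAlgebra.mapDomain (hemb σ) (AddMonoidAlgebra.single _ _) = _
    rw [AddMonoidAlgebra.mapDomain_single]
    congr 1
    ext i
    have := h g (by simpa using hg) i
    simp [hemb, this]
  rw [Finset.sum_congr rfl this]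
  ext g
  simp [AddMonoidAlgebra.coeff_sum, Finsupp.single_apply]

/-- Laurent monomial. -/
def mono (k : Type) [Field k] {σ : Type} (g : σ → ℤ) : Lau k σ := AddMonoidAlgebra.single g 1

lemma mono_mul (g h : σ → ℤ) : mono k g * mono k h = mono k (g + h) := by
  simp [mono]

lemma mono_zero : mono k (0 : σ → ℤ) = 1 := rfl

lemma mono_neg (g : σ → ℤ) : mono k (-g) * mono k g = 1 := by
  rw [mono_mul, neg_add_cancel, mono_zero]

lemma coeff_mono_mul (g h : σ → ℤ) (a : Lau k σ) :
    (mono k g * a).coeff h = a.coeff (h - g) := by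
  simp [mono, neg_add_eq_sub]

lemma phi_monomial (s : σ →₀ ℕ) : phi k σ (monomial s 1) = mono k (hemb σ s) := by
  change AddMonoidAlgebra.mapDomain (hemb σ) (AddMonoidAlgebra.single _ _) = _
  rw [AddMonoidAlgebra.mapDomain_single]; rfl

/-- Weighted degree. -/
def wdeg (w : σ → ℤ × ℤ) (g : σ → ℤ) : ℤ × ℤ := ∑ i, g i • w i

lemma wdeg_add (w : σ → ℤ × ℤ) (g h : σ → ℤ) : wdeg w (g + h) = wdeg w g + wdeg w h := by
  simp [wdeg, add_smul, Finset.sum_add_distrib]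

lemma wdeg_sub (w : σ → ℤ × ℤ) (g h : σ → ℤ) : wdeg w (g - h) = wdeg w g - wdeg w h := by
  simp [wdeg, sub_smul, Finset.sum_sub_distrib]

lemma wdeg_hemb (w : σ → ℤ × ℤ) (s : σ →₀ ℕ) : wdeg w (hemb σ s) = Finsupp.weight w s := by
  rw [Finsupp.weight_apply, Finsupp.sum_fintype _ _ (by simp)]
  simp [wdeg, hemb]

lemma coeff_mul_ne (a b : Lau k σ) (g : σ → ℤ) (h : (a * b).coeff g ≠ 0) :
    ∃ g1 g2, a.coeff g1 ≠ 0 ∧ b.coeff g2 ≠ 0 ∧ g1 + g2 = g := by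
  rw [AddMonoidAlgebra.coeff_mul] at h
  obtain ⟨g1, h1, h2⟩ := Finset.exists_ne_zero_of_sum_ne_zero h
  obtain ⟨g2, h3, h4⟩ := Finset.exists_ne_zero_of_sum_ne_zero h2
  refine ⟨g1, g2, by simpa using h1, by simpa using h3, ?_⟩
  by_contra h5
  simp [h5] at h4

/-- Multiplication by a homogeneous element commutes with taking components. -/
lemma comp_mul (w : σ → ℤ × ℤ) (f p : MvPolynomial σ k) (δ γ : ℤ × ℤ)
    (hf : IsWeightedHomogeneous w f δ) :
    weightedHomogeneousComponent w (γ + δ) (f * p) = f * weightedHomogeneousComponent w γ p := by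
  let _ := weightedGradedAlgebra k w
  have := DirectSum.coe_decompose_mul_add_of_left_mem (weightedHomogeneousSubmodule k w)
    (i := δ) (j := γ) (a := f) (b := p) hf
  rw [add_comm]
  simpa [← weightedDecomposition.decompose'_apply] using this


lemma kk_ringHom {ι : Type} [DecidableEq ι] [Fintype ι] {R R' : Type} [CommRing R] [CommRing R']
    (φ : R →+* R') (ord : ι → ℕ) (f : ι → R) (c : Finset ι → R) (U : Finset ι) :
    φ (kk ord f c U) = kk ord (fun i => φ (f i)) (fun U => φ (c U)) U := by
  simp only [kk_apply, map_sum, smul_eq_mul, map_mul, hh_apply]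
  congr 1; ext i; split_ifs <;> simp

lemma kk_ne {ι : Type} [DecidableEq ι] [Fintype ι] (ord : ι → ℕ) (f : ι → Lau k σ)
    (c : Finset ι → Lau k σ) (U : Finset ι) (g : σ → ℤ) (h : (kk ord f c U).coeff g ≠ 0) :
    ∃ i, i ∉ U ∧ ∃ g1 g2, (f i).coeff g1 ≠ 0 ∧ (c (insert i U)).coeff g2 ≠ 0 ∧ g1 + g2 = g := by
  rw [kk_apply, AddMonoidAlgebra.coeff_sum, Finsupp.finsetSum_apply] at h
  obtain ⟨i, _, hi⟩ := Finset.exists_ne_zero_of_sum_ne_zero h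
  obtain ⟨g1, g2, h1, h2, h3⟩ := coeff_mul_ne _ _ _ hi
  rw [hh_apply] at h2
  by_cases hU : i ∉ U
  · rw [if_pos hU] at h2
    refine ⟨i, hU, g1, g2, h1, ?_, h3⟩
    intro h0
    apply h2
    rw [AddMonoidAlgebra.coeff_smul, Finsupp.smul_apply, h0, smul_zero]
  · rw [if_neg hU] at h2
    simp at h2

lemma dd_coeff (ord : σ → ℕ) (c : Finset σ → Lau k σ) (T : Finset σ) (g : σ → ℤ) :
    (dd (Lau k σ) ord c T).coeff g = dd k ord (fun T => (c T).coeff g) T := by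
  simp only [dd_apply, AddMonoidAlgebra.coeff_sum, Finsupp.finsetSum_apply, ee_apply]
  congr 1; ext i
  split_ifs
  · rw [AddMonoidAlgebra.coeff_smul, Finsupp.smul_apply]
  · simp

end Laurent

section Column

variable {k : Type} [Field k] {n m : ℕ}

lemma column_exact (f : Fin (n+m) → PolyS k n m) (δ : ℤ × ℤ)
    (hf : ∀ i, IsWeightedHomogeneous (wt n m) (f i) δ)
    (hdim : ringKrullDim (PolyS k n m ⧸ satIdeal (Ideal.span (Set.range f)) (Birr k n m)) = (2:ℕ))
    (ord : Fin (n+m) → ℕ) (hord : Function.Injective ord)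
    (T : Finset (Fin (n+1) ⊕ Fin (m+1))) (i : Fin (n+1)) (j : Fin (m+1))
    (hi : Sum.inl i ∈ T) (hj : Sum.inr j ∈ T) (q : ℕ) (hq : 1 ≤ q) (γ : ℤ × ℤ)
    (c : Finset (Fin (n+m)) → Lau k (Fin (n+1) ⊕ Fin (m+1)))
    (hc : ∀ U g, (c U).coeff g ≠ 0 → U.card = q ∧ (∀ t, t ∉ T → 0 ≤ g t) ∧ wdeg (wt n m) g = γ + δ)
    (hk : kk ord (fun i => phi k _ (f i)) c = 0) :
    ∃ b : Finset (Fin (n+m)) → Lau k (Fin (n+1) ⊕ Fin (m+1)),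
      (∀ U g, (b U).coeff g ≠ 0 → U.card = q + 1 ∧ (∀ t, t ∉ T → 0 ≤ g t) ∧ wdeg (wt n m) g = γ) ∧
      kk ord (fun i => phi k _ (f i)) b = c := by
  classical
  -- a bound on pole orders
  obtain ⟨K, hK⟩ : ∃ K : ℕ, ∀ U g, (c U).coeff g ≠ 0 → ∀ t, -(K:ℤ) ≤ g t := by
    refine ⟨∑ U, ∑ g ∈ (c U).coeff.support, ∑ t, (g t).natAbs, ?_⟩
    intro U g hg t
    have h1 : (g t).natAbs ≤ ∑ t, (g t).natAbs :=
      Finset.single_le_sum (f := fun t => (g t).natAbs) (fun _ _ => Nat.zero_le _) (Finset.mem_univ t)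
    have h2 : ∑ t, (g t).natAbs ≤ ∑ g ∈ (c U).coeff.support, ∑ t, (g t).natAbs :=
      Finset.single_le_sum (f := fun g : _ → ℤ => ∑ t, (g t).natAbs) (fun _ _ => Nat.zero_le _)
        (by simpa using hg)
    have h3 : ∑ g ∈ (c U).coeff.support, ∑ t, (g t).natAbs ≤
        ∑ U, ∑ g ∈ (c U).coeff.support, ∑ t, (g t).natAbs :=
      Finset.single_le_sum (f := fun U => ∑ g ∈ (c U).coeff.support, ∑ t, (g t).natAbs)
        (fun _ _ => Nat.zero_le _) (Finset.mem_univ U)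
    have h4 := h1.trans (h2.trans h3)
    omega
  set h : (Fin (n+1) ⊕ Fin (m+1)) → ℤ := fun t => if t ∈ T then (K:ℤ) else 0 with hh
  have hz : ∀ U, ∃ z, phi k _ z = mono k h * c U := by
    intro U
    apply phi_surj
    intro g hg t
    rw [coeff_mono_mul] at hg
    have h1 := hK _ _ hg t
    have h2 := (hc _ _ hg).2.1 t
    simp only [Pi.sub_apply, hh] at h1 h2
    by_cases ht : t ∈ T
    · rw [if_pos ht] at h1; omega
    · rw [if_neg ht] at h2; have := h2 ht; omega
  choose z hz using hz
  have hzk : kk ord f z = 0 := by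
    ext1 U
    apply phi_inj
    rw [kk_ringHom]
    simp only [hz]
    have := congrFun (map_smul (kk ord (fun i => phi k _ (f i))) (mono k h) c) U
    rw [hk] at this
    simpa [Pi.smul_def, smul_eq_mul] using this
  have hzq : ∀ U, z U ≠ 0 → U.card = q := by
    intro U hU
    have h1 : phi k _ (z U) ≠ 0 := fun h0 => hU (phi_inj (by rw [h0, map_zero]))
    rw [hz] at h1
    obtain ⟨g, hg⟩ := lau_ne h1
    rw [coeff_mono_mul] at hg
    exact (hc _ _ hg).1
  obtain ⟨N, v, hv, hvk⟩ := koszul_chart f δ hf hdim ord hord i j q hq z hzq hzk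
  set s : (Fin (n+1) ⊕ Fin (m+1)) →₀ ℕ :=
    N • (Finsupp.single (Sum.inl i) 1 + Finsupp.single (Sum.inr j) 1) with hs
  have hXs : ((X (Sum.inl i) * X (Sum.inr j)) ^ N : PolyS k n m) = monomial s 1 := by
    rw [X, X, monomial_mul, monomial_pow]; simp [hs]
  rw [hXs] at hvk
  have hsT : ∀ t, t ∉ T → s t = 0 := by
    intro t ht
    have h1 : t ≠ Sum.inl i := by rintro rfl; exact ht hi
    have h2 : t ≠ Sum.inr j := by rintro rfl; exact ht hj
    simp [hs, Finsupp.single_apply, h1.symm, h2.symm]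
  set γ' := γ + wdeg (wt n m) h + wdeg (wt n m) (hemb _ s) with hγ'
  let v' : Finset (Fin (n+m)) → PolyS k n m := fun U => weightedHomogeneousComponent (wt n m) γ' (v U)
  have hv'k : kk ord f v' = (monomial s (1:k)) • z := by
    ext1 U
    have h1 : kk ord f v' U = weightedHomogeneousComponent (wt n m) (γ' + δ) (kk ord f v U) := by
      simp only [kk_apply, map_sum, smul_eq_mul]
      refine Finset.sum_congr rfl fun l _ => ?_
      rw [comp_mul _ _ _ _ _ (hf l), hh_apply, hh_apply]
      split_ifs
      · simp
      · rw [map_zsmul]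
    rw [h1, hvk]
    apply IsWeightedHomogeneous.weightedHomogeneousComponent_same
    intro s' hs'
    rw [← phi_coeff, Pi.smul_apply, smul_eq_mul, map_mul, phi_monomial, hz, coeff_mono_mul,
      coeff_mono_mul] at hs'
    have h2 := (hc _ _ hs').2.2
    rw [wdeg_sub, wdeg_sub, wdeg_hemb] at h2
    rw [hγ', ← sub_eq_iff_eq_add.mp (sub_eq_iff_eq_add.mp h2).symm.symm |>.symm] 
    abel
  refine ⟨fun U => mono k (-(h + hemb _ s)) * phi k _ (v' U), ?_, ?_⟩
  · intro U g hg
    rw [coeff_mono_mul] at hg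
    obtain ⟨s', hs', hs2⟩ := phi_coeff_ne _ _ hg
    refine ⟨hv U ?_, ?_, ?_⟩
    · intro h0
      simp [v', h0] at hs2
    · intro t ht
      have h1 := congrFun hs' t
      simp only [hemb, hh, Pi.sub_apply, Pi.neg_apply, Pi.add_apply, AddMonoidHom.coe_mk,
        ZeroHom.coe_mk, if_neg ht, hsT t ht] at h1
      have : (0:ℤ) ≤ s' t := by positivity
      push_cast at h1
      omega
    · have h1 := weightedHomogeneousComponent_isWeightedHomogeneous (w := wt n m) γ' (v U) hs2
      rw [← wdeg_hemb, hs', sub_neg_eq_add, wdeg_add, wdeg_add] at h1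
      rw [hγ'] at h1
      exact add_right_cancel (by rw [h1]; abel)
  · have h1 := map_smul (kk ord (fun i => phi k _ (f i))) (mono k (-(h + hemb _ s)))
      (fun U => phi k _ (v' U))
    ext1 U
    have h2 := congrFun h1 U
    simp only [Pi.smul_def, smul_eq_mul] at h2
    rw [h2, ← kk_ringHom, hv'k]
    simp only [Pi.smul_apply, smul_eq_mul, map_mul, phi_monomial, hz]
    rw [← mul_assoc, ← mul_assoc, mul_assoc (mono k _), mono_mul, add_comm (hemb _ s), mono_neg,
      one_mul]

end Column


section LaurentRow

variable {k : Type} [Field k] {σ : Type} [DecidableEq σ] [Fintype σ]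

/-- Set of negative exponents. -/
def negs (g : σ → ℤ) : Finset σ := Finset.univ.filter fun i => g i < 0

lemma negs_subset (g : σ → ℤ) (T : Finset σ) : negs g ⊆ T ↔ ∀ t, t ∉ T → 0 ≤ g t := by
  constructor
  · intro h t ht
    by_contra h'
    exact ht (h (by simp [negs]; omega))
  · intro h t ht
    by_contra h'
    have := h t h'
    simp [negs] at ht; omega

/-- The exponents which obstruct row exactness. -/
def badRow (Xs Ys : Finset σ) (p : ℕ) (g : σ → ℤ) : Prop :=
  (negs g = Xs ∧ p = Xs.card) ∨ (negs g = Ys ∧ p = Ys.card) ∨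
    (negs g = Finset.univ ∧ p + 1 = Fintype.card σ)

lemma coeff_asm (E : Finset (σ → ℤ)) (b : (σ → ℤ) → k) (g : σ → ℤ) :
    (∑ g ∈ E, AddMonoidAlgebra.single g (b g) : Lau k σ).coeff g = if g ∈ E then b g else 0 := by
  simp [AddMonoidAlgebra.coeff_sum, Finsupp.single_apply]

lemma ysing_coeff (Ys : Finset σ) (s : Lau k σ) (g : σ → ℤ) (T : Finset σ) :
    (ysing Ys s T).coeff g = ysing Ys (s.coeff g) T := by
  unfold ysing; split_ifs <;> simp

lemma lau_row_ge2 (ord : σ → ℕ) (hord : Function.Injective ord) (Xs Ys : Finset σ)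
    (hdisj : Disjoint Xs Ys) (hun : ∀ i, i ∈ Xs ∨ i ∈ Ys) (p : ℕ) (hp : 2 ≤ p)
    (w : σ → ℤ × ℤ) (γ : ℤ × ℤ)
    (c : Finset σ → Lau k σ) (hc : ∀ T g, (c T).coeff g ≠ 0 → Adm Xs Ys T ∧ T.card = p + 1 ∧
      (∀ t, t ∉ T → 0 ≤ g t) ∧ wdeg w g = γ)
    (hd : dd (Lau k σ) ord c = 0) (hbad : ∀ g, wdeg w g = γ → ¬ badRow Xs Ys p g) :
    ∃ b : Finset σ → Lau k σ, (∀ T g, (b T).coeff g ≠ 0 → Adm Xs Ys T ∧ T.card = p ∧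
      (∀ t, t ∉ T → 0 ≤ g t) ∧ wdeg w g = γ) ∧ dd (Lau k σ) ord b = c := by
  classical
  have key : ∀ g, ∃ b : Finset σ → k, wdeg w g = γ →
      ((∀ T, b T ≠ 0 → Adm Xs Ys T ∧ T.card = p ∧ negs g ⊆ T) ∧
        dd k ord b = fun T => (c T).coeff g) := by
    intro g
    by_cases hg : wdeg w g = γ
    · have hb := hbad g hg
      unfold badRow at hb
      push Not at hb
      obtain ⟨b, h1, h2⟩ := row_ge2 ord hord Xs Ys (negs g) hdisj hun p (fun T => (c T).coeff g)
        (by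
          intro T hT
          obtain ⟨h1, h2, h3, h4⟩ := hc T g hT
          exact ⟨h1, h2, (negs_subset g T).mpr h3⟩)
        (by
          ext T
          rw [← dd_coeff, hd]; simp)
        (by tauto) (by tauto) (by tauto) (Or.inl hp)
      exact ⟨b, fun _ => ⟨h1, h2⟩⟩
    · exact ⟨0, fun h => absurd h hg⟩
  choose b hb using key
  set E : Finset (σ → ℤ) := Finset.univ.biUnion fun T => (c T).coeff.support with hE
  have hEγ : ∀ g ∈ E, wdeg w g = γ := by
    intro g hg
    simp only [hE, Finset.mem_biUnion, Finsupp.mem_support_iff] at hg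
    obtain ⟨T, _, hT⟩ := hg
    exact (hc T g hT).2.2.2
  refine ⟨fun T => ∑ g ∈ E, AddMonoidAlgebra.single g (b g T), ?_, ?_⟩
  · intro T g hg
    rw [coeff_asm] at hg
    split_ifs at hg with hgE
    · obtain ⟨h1, h2, h3⟩ := (hb g (hEγ g hgE)).1 T hg
      exact ⟨h1, h2, (negs_subset g T).mp h3, hEγ g hgE⟩
    · exact absurd rfl hg
  · ext1 T
    apply lau_ext
    intro g
    rw [dd_coeff]
    simp only [coeff_asm]
    by_cases hgE : g ∈ E
    · simp only [if_pos hgE]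
      exact congrFun (hb g (hEγ g hgE)).2 T
    · simp only [if_neg hgE]
      have h1 : (c T).coeff g = 0 := by
        by_contra h
        exact hgE (by simp only [hE, Finset.mem_biUnion, Finsupp.mem_support_iff]
                      exact ⟨T, Finset.mem_univ _, h⟩)
      rw [h1]
      exact congrFun (map_zero (dd k ord)) T

lemma lau_row_one (ord : σ → ℕ) (hord : Function.Injective ord) (Xs Ys : Finset σ)
    (hdisj : Disjoint Xs Ys) (hun : ∀ i, i ∈ Xs ∨ i ∈ Ys)
    (w : σ → ℤ × ℤ) (γ : ℤ × ℤ)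
    (c : Finset σ → Lau k σ) (hc : ∀ T g, (c T).coeff g ≠ 0 → Adm Xs Ys T ∧ T.card = 2 ∧
      (∀ t, t ∉ T → 0 ≤ g t) ∧ wdeg w g = γ)
    (hd : dd (Lau k σ) ord c = 0) (hbad : ∀ g, wdeg w g = γ → ¬ badRow Xs Ys 1 g) :
    ∃ s : Lau k σ, (∀ g, s.coeff g ≠ 0 → (∀ t, 0 ≤ g t) ∧ wdeg w g = γ ∧ ∃ T, c T ≠ 0) ∧
      dd (Lau k σ) ord (ysing Ys s) = c := by
  classical
  have key : ∀ g, ∃ s : k, wdeg w g = γ → (((negs g).Nonempty → s = 0) ∧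
        dd k ord (ysing Ys s) = fun T => (c T).coeff g) := by
    intro g
    by_cases hg : wdeg w g = γ
    · have hb := hbad g hg
      unfold badRow at hb
      push Not at hb
      obtain ⟨b, h1, h2⟩ := row_one ord hord Xs Ys (negs g) hdisj hun (fun T => (c T).coeff g)
        (by
          intro T hT
          obtain ⟨h1, h2, h3, h4⟩ := hc T g hT
          exact ⟨h1, h2, (negs_subset g T).mpr h3⟩)
        (by
          ext T
          rw [← dd_coeff, hd]; simp)
        (by tauto) (by tauto) (by tauto)
      exact ⟨b, fun _ => ⟨h1, h2⟩⟩
    · exact ⟨0, fun h => absurd h hg⟩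
  choose b hb using key
  set E : Finset (σ → ℤ) := Finset.univ.biUnion fun T => (c T).coeff.support with hE
  have hEγ : ∀ g ∈ E, wdeg w g = γ ∧ ∃ T, c T ≠ 0 := by
    intro g hg
    simp only [hE, Finset.mem_biUnion, Finsupp.mem_support_iff] at hg
    obtain ⟨T, _, hT⟩ := hg
    exact ⟨(hc T g hT).2.2.2, T, fun h => hT (by simp [h])⟩
  refine ⟨∑ g ∈ E, AddMonoidAlgebra.single g (b g), ?_, ?_⟩
  · intro g hg
    rw [coeff_asm] at hg
    split_ifs at hg with hgE
    · have h1 := (hb g (hEγ g hgE).1).1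
      refine ⟨fun t => ?_, hEγ g hgE⟩
      by_contra ht
      exact hg (h1 ⟨t, by simp [negs]; omega⟩)
    · exact absurd rfl hg
  · ext1 T
    apply lau_ext
    intro g
    rw [dd_coeff]
    simp only [ysing_coeff, coeff_asm]
    by_cases hgE : g ∈ E
    · simp only [if_pos hgE]
      exact congrFun (hb g (hEγ g hgE).1).2 T
    · simp only [if_neg hgE]
      have h1 : (c T).coeff g = 0 := by
        by_contra h
        exact hgE (by simp only [hE, Finset.mem_biUnion, Finsupp.mem_support_iff]
                      exact ⟨T, Finset.mem_univ _, h⟩)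
      rw [h1]
      have h2 : (fun T => ysing Ys (0:k) T) = (0 : Finset σ → k) := by
        ext T; simp [ysing]
      rw [h2]
      exact congrFun (map_zero (dd k ord)) T

lemma ysing_dd_inj (ord : σ → ℕ) (Xs Ys : Finset σ) (hdisj : Disjoint Xs Ys)
    (x y : σ) (hx : x ∈ Xs) (hy : y ∈ Ys) (s : Lau k σ) (h : dd (Lau k σ) ord (ysing Ys s) = 0) :
    s = 0 := by
  have hxy : x ≠ y := by rintro rfl; exact Finset.disjoint_left.mp hdisj hx hy
  have h1 := congrFun h {x, y}
  rw [dd_pair ord _ x y hxy, ysing_sing hy] at h1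
  have h2 : ysing Ys s {x} = 0 := by
    unfold ysing
    rw [if_neg]
    rintro ⟨y', hy', h'⟩
    have := Finset.singleton_injective h'
    subst this
    exact Finset.disjoint_left.mp hdisj hx hy'
  rw [h2, smul_zero, add_zero, Pi.zero_apply] at h1
  have h3 : sg ord x {x, y} • (sg ord x {x, y} • s) = 0 := by rw [h1, smul_zero]
  rwa [smul_smul, sg_mul_self, one_smul] at h3

end LaurentRow


section Double

variable {k : Type} [Field k] {σ : Type} [DecidableEq σ] [Fintype σ]
  {ι : Type} [DecidableEq ι] [Fintype ι]

/-- Membership in the `(p,q)` term of the double complex. -/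
def InD (Xs Ys : Finset σ) (w : σ → ℤ × ℤ) (μ δ : ℤ × ℤ) (p q : ℕ)
    (c : Finset ι → Finset σ → Lau k σ) : Prop :=
  ∀ U T g, (c U T).coeff g ≠ 0 → U.card = q ∧ Adm Xs Ys T ∧ T.card = p + 1 ∧
    (∀ t, t ∉ T → 0 ≤ g t) ∧ wdeg w g = μ - (q : ℤ) • δ

lemma InD.sub {Xs Ys : Finset σ} {w : σ → ℤ × ℤ} {μ δ : ℤ × ℤ} {p q : ℕ}
    {c c' : Finset ι → Finset σ → Lau k σ} (h : InD Xs Ys w μ δ p q c)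
    (h' : InD Xs Ys w μ δ p q c') : InD Xs Ys w μ δ p q (c - c') := by
  intro U T g hg
  by_cases h0 : (c U T).coeff g = 0
  · apply h' U T g
    intro h1
    apply hg
    simp [h0, h1]
  · exact h U T g h0

lemma kk_proj (ord : ι → ℕ) (F : ι → Lau k σ) (c : Finset ι → Finset σ → Lau k σ)
    (U : Finset ι) (T : Finset σ) : kk ord F c U T = kk ord F (fun U => c U T) U :=
  (kk_map ord F (LinearMap.proj (φ := fun _ : Finset σ => Lau k σ) T) c U).symm

lemma kk_dd (ord : ι → ℕ) (ords : σ → ℕ) (F : ι → Lau k σ) (c : Finset ι → Finset σ → Lau k σ)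
    (U : Finset ι) : kk ord F (fun U => dd (Lau k σ) ords (c U)) U =
      dd (Lau k σ) ords (kk ord F c U) :=
  kk_map ord F (dd (Lau k σ) ords) c U

lemma InD.kk {Xs Ys : Finset σ} {w : σ → ℤ × ℤ} {μ δ : ℤ × ℤ} {p q : ℕ} (ord : ι → ℕ)
    {F : ι → Lau k σ} (hF : ∀ i g, (F i).coeff g ≠ 0 → wdeg w g = δ ∧ ∀ t, 0 ≤ g t)
    {c : Finset ι → Finset σ → Lau k σ} (h : InD Xs Ys w μ δ p (q+1) c) :
    InD Xs Ys w μ δ p q (kk ord F c) := by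
  intro U T g hg
  rw [kk_proj] at hg
  obtain ⟨i, hi, g1, g2, h1, h2, rfl⟩ := kk_ne _ _ _ _ _ hg
  obtain ⟨a1, a2, a3, a4, a5⟩ := h _ _ _ h2
  obtain ⟨b1, b2⟩ := hF _ _ h1
  refine ⟨?_, a2, a3, ?_, ?_⟩
  · rw [Finset.card_insert_of_notMem hi] at a1; omega
  · intro t ht
    exact add_nonneg (b2 t) (a4 t ht)
  · rw [wdeg_add, b1, a5]
    push_cast
    rw [add_smul, one_smul]
    abel

lemma InD.dd {Xs Ys : Finset σ} {w : σ → ℤ × ℤ} {μ δ : ℤ × ℤ} {p q : ℕ} (ords : σ → ℕ)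
    {c : Finset ι → Finset σ → Lau k σ} (h : InD Xs Ys w μ δ p q c) :
    InD Xs Ys w μ δ (p+1) q (fun U => dd (Lau k σ) ords (c U)) := by
  intro U T g hg
  simp only at hg
  rw [dd_coeff] at hg
  obtain ⟨i, hi, h1⟩ := dd_ne_zero k ords _ _ hg
  obtain ⟨a1, ⟨⟨x, hx, hx'⟩, ⟨y, hy, hy'⟩⟩, a3, a4, a5⟩ := h _ _ _ h1
  refine ⟨a1, ⟨⟨x, hx, Finset.mem_of_mem_erase hx'⟩, ⟨y, hy, Finset.mem_of_mem_erase hy'⟩⟩,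
    ?_, ?_, a5⟩
  · rw [Finset.card_erase_of_mem hi] at a3
    have := Finset.card_pos.mpr ⟨i, hi⟩
    omega
  · intro t ht
    exact a4 t (fun h' => ht (Finset.mem_of_mem_erase h'))

lemma InD.eq_zero {Xs Ys : Finset σ} {w : σ → ℤ × ℤ} {μ δ : ℤ × ℤ} {p q : ℕ}
    {c : Finset ι → Finset σ → Lau k σ} (h : InD Xs Ys w μ δ p q c) (hq : Fintype.card ι < q) :
    c = 0 := by
  ext1 U; ext1 T
  by_contra h'
  obtain ⟨g, hg⟩ := lau_ne h'
  have h1 := (h U T g hg).1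
  have := Finset.card_le_univ U
  omega

lemma InD_zero {Xs Ys : Finset σ} {w : σ → ℤ × ℤ} {μ δ : ℤ × ℤ} {p q : ℕ} :
    InD Xs Ys w μ δ p q (0 : Finset ι → Finset σ → Lau k σ) := by
  intro U T g hg
  simp at hg

lemma InD.row {Xs Ys : Finset σ} {w : σ → ℤ × ℤ} {μ δ : ℤ × ℤ} {p q : ℕ} (ords : σ → ℕ)
    (hords : Function.Injective ords) (hdisj : Disjoint Xs Ys) (hun : ∀ i, i ∈ Xs ∨ i ∈ Ys)
    (hp : 1 ≤ p)
    (hbad : q ≤ Fintype.card ι → ∀ g, wdeg w g = μ - (q : ℤ) • δ → ¬ badRow Xs Ys (p+1) g)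
    {c : Finset ι → Finset σ → Lau k σ} (h : InD Xs Ys w μ δ (p+1) q c)
    (hd : ∀ U, _root_.dd (Lau k σ) ords (c U) = 0) :
    ∃ b, InD Xs Ys w μ δ p q b ∧ ∀ U, _root_.dd (Lau k σ) ords (b U) = c U := by
  by_cases hq : q ≤ Fintype.card ι
  · have := fun U => lau_row_ge2 ords hords Xs Ys hdisj hun (p+1) (by omega) w (μ - (q : ℤ) • δ) (c U)
      (fun T g hg => (h U T g hg).2) (hd U) (hbad hq)
    choose b hb using this
    refine ⟨fun U => if U.card = q then b U else 0, ?_, ?_⟩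
    · intro U T g hg
      by_cases hU : U.card = q
      · simp only [if_pos hU] at hg
        exact ⟨hU, (hb U).1 T g hg⟩
      · simp [if_neg hU] at hg
    · intro U
      by_cases hU : U.card = q
      · simp only [if_pos hU]
        exact (hb U).2
      · simp only [if_neg hU, map_zero]
        ext1 T
        by_contra h'
        obtain ⟨g, hg⟩ := lau_ne (Ne.symm h')
        exact hU (h U T g hg).1
  · have h0 := h.eq_zero (by omega)
    exact ⟨0, InD_zero, fun U => by rw [h0]; exact map_zero _⟩

lemma double_step {Xs Ys : Finset σ} {w : σ → ℤ × ℤ} {μ δ : ℤ × ℤ} (ords : σ → ℕ)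
    (hords : Function.Injective ords) (ord : ι → ℕ) (hord : Function.Injective ord)
    (hdisj : Disjoint Xs Ys) (hun : ∀ i, i ∈ Xs ∨ i ∈ Ys)
    {F : ι → Lau k σ} (hF : ∀ i g, (F i).coeff g ≠ 0 → wdeg w g = δ ∧ ∀ t, 0 ≤ g t)
    (hbad : ∀ p q, p + 1 ≤ q → q ≤ Fintype.card ι → ∀ g, wdeg w g = μ - (q : ℤ) • δ →
      ¬ badRow Xs Ys p g)
    (hcol : ∀ p q, 1 ≤ q → ∀ c : Finset ι → Finset σ → Lau k σ, InD Xs Ys w μ δ p q c →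
      kk ord F c = 0 → ∃ b, InD Xs Ys w μ δ p (q+1) b ∧ kk ord F b = c) :
    ∀ j p q, Fintype.card ι < q + j → 1 ≤ p → p ≤ q → ∀ c : Finset ι → Finset σ → Lau k σ,
      InD Xs Ys w μ δ p q c → kk ord F c = 0 → (∀ U, dd (Lau k σ) ords (c U) = 0) →
      ∃ b, InD Xs Ys w μ δ p (q+1) b ∧ kk ord F b = c ∧ (∀ U, dd (Lau k σ) ords (b U) = 0) := by
  intro j
  induction j with
  | zero =>
    intro p q hj hp hpq c hc _ _
    refine ⟨0, InD_zero, ?_, fun U => map_zero _⟩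
    rw [hc.eq_zero (by omega), map_zero]
  | succ j ih =>
    intro p q hj hp hpq c hc hck hcd
    obtain ⟨w', hw', hw'k⟩ := hcol p q (by omega) c hc hck
    have hw'd := hw'.dd ords
    obtain ⟨v, hv, hvk, hvd⟩ := ih (p+1) (q+1) (by omega) (by omega) (by omega) _ hw'd
      (by ext1 U; rw [kk_dd, hw'k, hcd]; rfl) (fun U => dd_dd _ _ hords _)
    obtain ⟨u, hu, hud⟩ := hv.row ords hords hdisj hun hp
      (fun hq => hbad (p+1) (q+1+1) (by omega) hq) hvd
    refine ⟨w' - kk ord F u, hw'.sub (hu.kk ord hF), ?_, ?_⟩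
    · rw [map_sub, kk_kk ord hord, sub_zero, hw'k]
    · intro U
      rw [Pi.sub_apply, map_sub, ← kk_dd]
      have : (fun U => dd (Lau k σ) ords (u U)) = v := by ext1 U; exact hud U
      rw [this, hvk, sub_self]

lemma ysing_linear (Ys : Finset σ) : ∃ L : Lau k σ →ₗ[Lau k σ] (Finset σ → Lau k σ),
    ∀ s, L s = ysing Ys s := by
  refine ⟨⟨⟨fun s => ysing Ys s, ?_⟩, ?_⟩, fun s => rfl⟩
  · intro s t; ext1 T; simp only [ysing, Pi.add_apply]; split_ifs <;> simp
  · intro s t; ext1 T; simp only [ysing, Pi.smul_apply]; split_ifs <;> simp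

lemma double_final {Xs Ys : Finset σ} {w : σ → ℤ × ℤ} {μ δ : ℤ × ℤ} (ords : σ → ℕ)
    (hords : Function.Injective ords) (ord : ι → ℕ) (hord : Function.Injective ord)
    (hdisj : Disjoint Xs Ys) (hun : ∀ i, i ∈ Xs ∨ i ∈ Ys) (x y : σ) (hx : x ∈ Xs) (hy : y ∈ Ys)
    {F : ι → Lau k σ} (hF : ∀ i g, (F i).coeff g ≠ 0 → wdeg w g = δ ∧ ∀ t, 0 ≤ g t)
    (hbad : ∀ p q, p + 1 ≤ q → q ≤ Fintype.card ι → ∀ g, wdeg w g = μ - (q : ℤ) • δ →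
      ¬ badRow Xs Ys p g)
    (hcol : ∀ p q, 1 ≤ q → ∀ c : Finset ι → Finset σ → Lau k σ, InD Xs Ys w μ δ p q c →
      kk ord F c = 0 → ∃ b, InD Xs Ys w μ δ p (q+1) b ∧ kk ord F b = c)
    (q : ℕ) (hq : 1 ≤ q) (z : Finset ι → Lau k σ)
    (hz : ∀ U g, (z U).coeff g ≠ 0 → U.card = q ∧ (∀ t, 0 ≤ g t) ∧ wdeg w g = μ - (q:ℤ) • δ)
    (hzk : kk ord F z = 0) :
    ∃ u : Finset ι → Lau k σ, (∀ U g, (u U).coeff g ≠ 0 → U.card = q + 1 ∧ (∀ t, 0 ≤ g t) ∧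
      wdeg w g = μ - ((q+1 : ℕ):ℤ) • δ) ∧ kk ord F u = z := by
  obtain ⟨L, hL⟩ := ysing_linear (k := k) Ys
  let LL := (dd (Lau k σ) ords) ∘ₗ L
  have hLL : ∀ s, LL s = dd (Lau k σ) ords (ysing Ys s) := fun s => by simp [LL, hL]
  have hLinj : ∀ s, LL s = 0 → s = 0 := fun s hs =>
    ysing_dd_inj ords Xs Ys hdisj x y hx hy s (by rw [← hLL, hs])
  have hD : InD Xs Ys w μ δ 1 q (fun U => LL (z U)) := by
    intro U T g hg
    simp only [hLL] at hg
    rw [dd_coeff] at hg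
    simp only [ysing_coeff] at hg
    obtain ⟨h1, h2, h3⟩ := dd_ysing_ne_zero ords hords Xs Ys hun _ _ hg
    obtain ⟨a1, a2, a3⟩ := hz U g h1
    exact ⟨a1, h2, h3, fun t _ => a2 t, a3⟩
  obtain ⟨b, hb, hbk, hbd⟩ := double_step ords hords ord hord hdisj hun hF hbad hcol
    (Fintype.card ι + 1) 1 q (by omega) le_rfl hq _ hD
    (by ext1 U; rw [kk_map, hzk]; simp) (fun U => by rw [hLL]; exact dd_dd _ _ hords _)
  by_cases hqr : q + 1 ≤ Fintype.card ι
  · have := fun U => lau_row_one ords hords Xs Ys hdisj hun w (μ - ((q+1:ℕ):ℤ) • δ) (b U)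
      (fun T g hg => (hb U T g hg).2) (hbd U) (hbad 1 (q+1) (by omega) hqr)
    choose u hu using this
    refine ⟨u, ?_, ?_⟩
    · intro U g hg
      obtain ⟨h1, h2, T, hT⟩ := (hu U).1 g hg
      obtain ⟨g', hg'⟩ := lau_ne hT
      exact ⟨(hb U T g' hg').1, h1, h2⟩
    · ext1 U
      rw [← sub_eq_zero]
      apply hLinj
      rw [map_sub, ← kk_map]
      have : (fun U => LL (u U)) = b := by ext1 U; rw [hLL]; exact (hu U).2
      rw [this, hbk, sub_self]
  · have h0 := hb.eq_zero (by omega)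
    refine ⟨0, by simp, ?_⟩
    rw [map_zero]
    ext1 U
    symm
    apply hLinj
    have := congrFun hbk U
    rw [h0, map_zero] at this
    exact this.symm

end Double


section KoszulExact

variable {k : Type} [Field k] {n m : ℕ}

/-- The `x` variables. -/
def xset (n m : ℕ) : Finset (Fin (n+1) ⊕ Fin (m+1)) := Finset.univ.image Sum.inl
/-- The `y` variables. -/
def yset (n m : ℕ) : Finset (Fin (n+1) ⊕ Fin (m+1)) := Finset.univ.image Sum.inr

lemma xset_card : (xset n m).card = n + 1 := by
  rw [xset, Finset.card_image_of_injective _ Sum.inl_injective]; simp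
lemma yset_card : (yset n m).card = m + 1 := by
  rw [yset, Finset.card_image_of_injective _ Sum.inr_injective]; simp

lemma xy_disj : Disjoint (xset n m) (yset n m) := by
  rw [Finset.disjoint_left]; simp [xset, yset]

lemma xy_un (i : Fin (n+1) ⊕ Fin (m+1)) : i ∈ xset n m ∨ i ∈ yset n m := by
  rcases i with i | i <;> simp [xset, yset]

lemma wdeg_wt (g : (Fin (n+1) ⊕ Fin (m+1)) → ℤ) :
    wdeg (wt n m) g = (∑ i, g (Sum.inl i), ∑ j, g (Sum.inr j)) := by
  simp only [wdeg, wt, Fintype.sum_sum_type, Sum.elim_inl, Sum.elim_inr]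
  ext <;> simp [Prod.fst_sum, Prod.snd_sum]

lemma not_bad (d e : ℕ) (μ : ℤ × ℤ) (hμ : ∀ i : ℤ, 2 ≤ i → μ ∉ GammaSet n m d e i)
    (p q : ℕ) (hpq : p + 1 ≤ q) (hq : q ≤ n + m) (g : (Fin (n+1) ⊕ Fin (m+1)) → ℤ)
    (hg : wdeg (wt n m) g = μ - (q:ℤ) • ((d:ℤ), (e:ℤ))) : ¬ badRow (xset n m) (yset n m) p g := by
  rw [wdeg_wt] at hg
  have hg1 : ∑ i, g (Sum.inl i) = μ.1 - q * d := by simpa using congrArg Prod.fst hg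
  have hg2 : ∑ i, g (Sum.inr i) = μ.2 - q * e := by simpa using congrArg Prod.snd hg
  rintro (⟨h1, h2⟩ | ⟨h1, h2⟩ | ⟨h1, h2⟩)
  · rw [xset_card] at h2
    have hx : ∀ i, g (Sum.inl i) ≤ -1 := by
      intro i
      have : Sum.inl i ∈ negs g := by rw [h1]; simp [xset]
      simp [negs] at this; omega
    have hy : ∀ i, 0 ≤ g (Sum.inr i) := by
      intro i
      by_contra hlt
      have : Sum.inr i ∈ negs g := by simp [negs]; omega
      rw [h1] at this
      simp [xset] at this
    have s1 : ∑ i, g (Sum.inl i) ≤ ∑ i : Fin (n+1), (-1 : ℤ) := Finset.sum_le_sum fun i _ => hx i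
    have s2 : 0 ≤ ∑ i, g (Sum.inr i) := Finset.sum_nonneg fun i _ => hy i
    simp at s1
    refine hμ ((q:ℤ) - n) (by omega) (Or.inl ⟨by omega, by omega, ?_, ?_⟩)
    · have : (n:ℤ) + (q - n) = q := by ring
      rw [this]; linarith
    · have : (n:ℤ) + (q - n) = q := by ring
      rw [this]; linarith
  · rw [yset_card] at h2
    have hx : ∀ i, g (Sum.inr i) ≤ -1 := by
      intro i
      have : Sum.inr i ∈ negs g := by rw [h1]; simp [yset]
      simp [negs] at this; omega
    have hy : ∀ i, 0 ≤ g (Sum.inl i) := by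
      intro i
      by_contra hlt
      have : Sum.inl i ∈ negs g := by simp [negs]; omega
      rw [h1] at this
      simp [yset] at this
    have s1 : ∑ i, g (Sum.inr i) ≤ ∑ i : Fin (m+1), (-1 : ℤ) := Finset.sum_le_sum fun i _ => hx i
    have s2 : 0 ≤ ∑ i, g (Sum.inl i) := Finset.sum_nonneg fun i _ => hy i
    simp at s1
    refine hμ ((q:ℤ) - m) (by omega) (Or.inr ⟨by omega, by omega, ?_, ?_⟩)
    · have : (m:ℤ) + (q - m) = q := by ring
      rw [this]; linarith
    · have : (m:ℤ) + (q - m) = q := by ring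
      rw [this]; linarith
  · simp at h2
    omega

lemma columns (f : Fin (n+m) → PolyS k n m) (μ δ : ℤ × ℤ)
    (hf : ∀ i, IsWeightedHomogeneous (wt n m) (f i) δ)
    (hdim : ringKrullDim (PolyS k n m ⧸ satIdeal (Ideal.span (Set.range f)) (Birr k n m)) = (2:ℕ))
    (ord : Fin (n+m) → ℕ) (hord : Function.Injective ord) (p q : ℕ) (hq : 1 ≤ q)
    (c : Finset (Fin (n+m)) → Finset (Fin (n+1) ⊕ Fin (m+1)) → Lau k (Fin (n+1) ⊕ Fin (m+1)))
    (hc : InD (xset n m) (yset n m) (wt n m) μ δ p q c)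
    (hk : kk ord (fun i => phi k _ (f i)) c = 0) :
    ∃ b, InD (xset n m) (yset n m) (wt n m) μ δ p (q+1) b ∧
      kk ord (fun i => phi k _ (f i)) b = c := by
  classical
  have key : ∀ T, ∃ b : Finset (Fin (n+m)) → Lau k (Fin (n+1) ⊕ Fin (m+1)),
      (∀ U g, (b U).coeff g ≠ 0 → U.card = q + 1 ∧ Adm (xset n m) (yset n m) T ∧ T.card = p + 1 ∧
        (∀ t, t ∉ T → 0 ≤ g t) ∧ wdeg (wt n m) g = μ - ((q+1:ℕ):ℤ) • δ) ∧
      kk ord (fun i => phi k _ (f i)) b = fun U => c U T := by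
    intro T
    by_cases hT : Adm (xset n m) (yset n m) T ∧ T.card = p + 1
    · obtain ⟨hA, hcard⟩ := hT
      obtain ⟨⟨x, hx, hxT⟩, ⟨y, hy, hyT⟩⟩ := id hA
      simp only [xset, yset, Finset.mem_image, Finset.mem_univ, true_and] at hx hy
      obtain ⟨i, rfl⟩ := hx
      obtain ⟨j, rfl⟩ := hy
      obtain ⟨b, hb, hbk⟩ := column_exact f δ hf hdim ord hord T i j hxT hyT q hq
        (μ - ((q+1:ℕ):ℤ) • δ) (fun U => c U T) (by
          intro U g hg
          obtain ⟨h1, -, -, h2, h3⟩ := hc U T g hg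
          refine ⟨h1, h2, ?_⟩
          rw [h3]; push_cast; rw [add_smul, one_smul]; abel)
        (by ext1 U; rw [← kk_proj, hk]; rfl)
      refine ⟨b, ?_, hbk⟩
      intro U g hg
      obtain ⟨h1, h2, h3⟩ := hb U g hg
      exact ⟨h1, hA, hcard, h2, h3⟩
    · refine ⟨0, by simp, ?_⟩
      rw [map_zero]
      ext1 U
      by_contra h'
      obtain ⟨g, hg⟩ := lau_ne (Ne.symm h')
      obtain ⟨-, h1, h2, -⟩ := hc U T g hg
      exact hT ⟨h1, h2⟩
  choose b hb using key
  refine ⟨fun U T => b T U, fun U T g hg => (hb T).1 U g hg, ?_⟩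
  ext1 U; ext1 T
  rw [kk_proj]
  exact congrFun (hb T).2 U

theorem koszul_exact (d e : ℕ) (f : Fin (n+m) → PolyS k n m)
    (I : Ideal (PolyS k n m)) (hCI : IsCIPoints k n m d e f I)
    (μ : ℤ × ℤ) (hμ : ∀ i : ℤ, 2 ≤ i → μ ∉ GammaSet n m d e i)
    (q : ℕ) (hq : 1 ≤ q) (z : Finset (Fin (n+m)) → PolyS k n m)
    (hz : ∀ U, z U ∈ grad k n m (μ - (q:ℤ) • ((d:ℤ), (e:ℤ))))
    (hzq : ∀ U, z U ≠ 0 → U.card = q) (hzk : kk Fin.val f z = 0) :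
    ∃ u : Finset (Fin (n+m)) → PolyS k n m,
      (∀ U, u U ∈ grad k n m (μ - ((q+1:ℕ):ℤ) • ((d:ℤ), (e:ℤ)))) ∧
      (∀ U, u U ≠ 0 → U.card = q + 1) ∧ kk Fin.val f u = z := by
  obtain ⟨hf, rfl, hdim⟩ := hCI
  have hdim2 : ringKrullDim (PolyS k n m ⧸ satIdeal (Ideal.span (Set.range f)) (Birr k n m))
      = (2:ℕ) := by
    unfold CodimEq at hdim
    rw [hdim]
    congr 2
    omega
  set δ : ℤ × ℤ := ((d:ℤ), (e:ℤ)) with hδ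
  have hf' : ∀ i, IsWeightedHomogeneous (wt n m) (f i) δ := hf
  have hordF : Function.Injective (Fin.val : Fin (n+m) → ℕ) := Fin.val_injective
  obtain ⟨u, hu, huk⟩ := double_final (k := k) (Xs := xset n m) (Ys := yset n m) (w := wt n m)
    (μ := μ) (δ := δ) (fun i => (finSumFinEquiv i).val)
    (fun i j h => finSumFinEquiv.injective (Fin.val_injective h)) Fin.val hordF
    xy_disj xy_un (Sum.inl 0) (Sum.inr 0) (by simp [xset]) (by simp [yset])
    (F := fun i => phi k _ (f i)) (by
      intro i g hg
      obtain ⟨s, rfl, hs⟩ := phi_coeff_ne _ _ hg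
      exact ⟨by rw [wdeg_hemb]; exact hf' i hs, fun t => by simp [hemb]⟩)
    (by
      intro p q h1 h2 g hg
      rw [Fintype.card_fin] at h2
      exact not_bad d e μ hμ p q h1 h2 g hg)
    (fun p q hq c hc hk => columns f μ δ hf' hdim2 Fin.val hordF p q hq c hc hk)
    q hq (fun U => phi k _ (z U)) (by
      intro U g hg
      obtain ⟨s, rfl, hs⟩ := phi_coeff_ne _ _ hg
      refine ⟨hzq U fun h => by simp [h] at hs, fun t => by simp [hemb], ?_⟩
      rw [wdeg_hemb]
      exact hz U hs)
    (by ext1 U; rw [← kk_ringHom, hzk]; simp)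
  have h1 : ∀ U, ∃ v, phi k _ v = u U := fun U => phi_surj _ fun g hg => (hu U g hg).2.1
  choose v hv using h1
  refine ⟨v, ?_, ?_, ?_⟩
  · intro U s hs
    rw [← phi_coeff, hv] at hs
    rw [← wdeg_hemb]
    exact (hu U _ hs).2.2
  · intro U hU
    have h2 : u U ≠ 0 := fun h => hU (phi_inj (by rw [hv, h, map_zero]))
    obtain ⟨g, hg⟩ := lau_ne h2
    exact (hu U g hg).1
  · ext1 U
    apply phi_inj
    rw [kk_ringHom]
    simp only [hv]
    rw [huk]

end KoszulExact


section HilbertS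

variable {k : Type} [Field k] {n m : ℕ}

lemma weight_wt (s : (Fin (n+1) ⊕ Fin (m+1)) →₀ ℕ) : Finsupp.weight (wt n m) s =
    (((∑ i, s (Sum.inl i) : ℕ) : ℤ), ((∑ j, s (Sum.inr j) : ℕ) : ℤ)) := by
  rw [← wdeg_hemb, wdeg_wt]
  simp [hemb]

/-- Monomials of bidegree `(a,b)`. -/
def monEquiv (n m a b : ℕ) :
    {s : (Fin (n+1) ⊕ Fin (m+1)) →₀ ℕ | Finsupp.weight (wt n m) s = ((a:ℤ), (b:ℤ))} ≃
    {P : Fin (n+1) → ℕ // ∑ i, P i = a} × {P : Fin (m+1) → ℕ // ∑ i, P i = b} where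
  toFun s := (⟨fun i => s.1 (Sum.inl i), by
      have h := s.2; rw [Set.mem_ofPred_eq, weight_wt] at h
      exact Nat.cast_injective (R := ℤ) (congrArg Prod.fst h)⟩, ⟨fun i => s.1 (Sum.inr i), by
      have h := s.2; rw [Set.mem_ofPred_eq, weight_wt] at h
      exact Nat.cast_injective (R := ℤ) (congrArg Prod.snd h)⟩)
  invFun P := ⟨Finsupp.equivFunOnFinite.symm (Sum.elim P.1.1 P.2.1), by
      rw [Set.mem_ofPred_eq, weight_wt]
      simp only [Finsupp.equivFunOnFinite_symm_apply_apply, Sum.elim_inl, Sum.elim_inr]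
      rw [P.1.2, P.2.2]⟩
  left_inv s := by
    apply Subtype.ext
    ext i
    rcases i with i | i <;> simp
  right_inv P := by
    ext i <;> simp

lemma mon_empty (γ : ℤ × ℤ) (h : γ.1 < 0 ∨ γ.2 < 0) :
    {s : (Fin (n+1) ⊕ Fin (m+1)) →₀ ℕ | Finsupp.weight (wt n m) s = γ} = ∅ := by
  ext s
  simp only [Set.mem_ofPred_eq, Set.mem_empty_iff_false, iff_false, weight_wt]
  rintro rfl
  simp only at h
  omega

lemma ibin_neg (n : ℕ) (a : ℤ) (h : a < 0) : ibin ((n:ℤ) + a) n = 0 := by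
  unfold ibin
  split_ifs with h1
  · rfl
  · rw [Nat.choose_eq_zero_of_lt (by omega)]; rfl

lemma ibin_nat (n a : ℕ) : ibin ((n:ℤ) + a) n = ((n + a).choose n : ℤ) := by
  unfold ibin
  rw [if_neg (by omega)]
  congr 2

lemma mon_finite (γ : ℤ × ℤ) :
    Finite {s : (Fin (n+1) ⊕ Fin (m+1)) →₀ ℕ | Finsupp.weight (wt n m) s = γ} := by
  by_cases h : γ.1 < 0 ∨ γ.2 < 0
  · rw [mon_empty γ h]; infer_instance
  · push Not at h
    obtain ⟨a, b⟩ := γ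
    simp only at h
    lift a to ℕ using h.1
    lift b to ℕ using h.2
    have := Finite.of_equiv _ (Sym.equivNatSumOfFintype (Fin (n+1)) a)
    have := Finite.of_equiv _ (Sym.equivNatSumOfFintype (Fin (m+1)) b)
    exact Finite.of_equiv _ (monEquiv n m a b).symm

lemma mon_card (γ : ℤ × ℤ) :
    (Nat.card {s : (Fin (n+1) ⊕ Fin (m+1)) →₀ ℕ | Finsupp.weight (wt n m) s = γ} : ℤ) =
      ibin ((n:ℤ) + γ.1) n * ibin ((m:ℤ) + γ.2) m := by
  by_cases h : γ.1 < 0 ∨ γ.2 < 0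
  · rw [mon_empty γ h]
    rcases h with h | h
    · rw [ibin_neg n _ h]; simp
    · rw [ibin_neg m _ h]; simp
  · push Not at h
    obtain ⟨a, b⟩ := γ
    simp only at h
    lift a to ℕ using h.1
    lift b to ℕ using h.2
    rw [Nat.card_congr (monEquiv n m a b), Nat.card_prod,
      ← Nat.card_congr (Sym.equivNatSumOfFintype (Fin (n+1)) a),
      ← Nat.card_congr (Sym.equivNatSumOfFintype (Fin (m+1)) b), Nat.card_eq_fintype_card,
      Nat.card_eq_fintype_card, Sym.card_sym_eq_choose, Sym.card_sym_eq_choose]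
    simp only [ibin_nat, Fintype.card_fin]
    have h1 : n + 1 + a - 1 = n + a := by omega
    have h2 : m + 1 + b - 1 = m + b := by omega
    rw [h1, h2, Nat.choose_symm_add, Nat.choose_symm_add]
    push_cast; rfl

/-- The graded piece as a finitely supported function space. -/
def gradEquiv (k : Type) [Field k] (n m : ℕ) (γ : ℤ × ℤ) : grad k n m γ ≃ₗ[k]
    ({s : (Fin (n+1) ⊕ Fin (m+1)) →₀ ℕ | Finsupp.weight (wt n m) s = γ} →₀ k) :=
  (LinearEquiv.ofEq _ _ (weightedHomogeneousSubmodule_eq_finsupp_supported k (wt n m) γ)).trans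
    (AddMonoidAlgebra.supportedEquivFinsupp _)

instance grad_fin (γ : ℤ × ℤ) : FiniteDimensional k (grad k n m γ) := by
  have := mon_finite (n := n) (m := m) γ
  exact Module.Finite.equiv (gradEquiv k n m γ).symm

lemma grad_finrank (γ : ℤ × ℤ) : (Module.finrank k (grad k n m γ) : ℤ) =
    ibin ((n:ℤ) + γ.1) n * ibin ((m:ℤ) + γ.2) m := by
  have := mon_finite (n := n) (m := m) γ
  have := Fintype.ofFinite
    {s : (Fin (n+1) ⊕ Fin (m+1)) →₀ ℕ | Finsupp.weight (wt n m) s = γ}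
  rw [(gradEquiv k n m γ).finrank_eq, Module.finrank_finsupp_self, ← Nat.card_eq_fintype_card,
    mon_card]

end HilbertS

section Count

lemma finrank_map_ker {k V W : Type} [Field k] [AddCommGroup V] [Module k V] [AddCommGroup W]
    [Module k W] (L : V →ₗ[k] W) (N : Submodule k V) [FiniteDimensional k N] :
    Module.finrank k (N.map L) + Module.finrank k (N ⊓ LinearMap.ker L : Submodule k V) =
      Module.finrank k N := by
  have h := (L.domRestrict N).finrank_range_add_finrank_ker
  rw [LinearMap.range_domRestrict, LinearMap.ker_domRestrict,
    ← Submodule.finrank_map_subtype_eq] at h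
  rw [← h, Submodule.map_comap_subtype]

variable {k : Type} [Field k] {n m : ℕ}

/-- Degree `μ` strand of the `q`-th Koszul term. -/
def KS (k : Type) [Field k] (n m d e : ℕ) (μ : ℤ × ℤ) (q : ℕ) :
    Submodule k (Finset (Fin (n+m)) → PolyS k n m) where
  carrier := {c | (∀ U, c U ∈ grad k n m (μ - (q:ℤ) • ((d:ℤ), (e:ℤ)))) ∧
    ∀ U, U.card ≠ q → c U = 0}
  add_mem' h h' := ⟨fun U => add_mem (h.1 U) (h'.1 U), fun U hU => by simp [h.2 U hU, h'.2 U hU]⟩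
  zero_mem' := ⟨fun U => zero_mem _, fun U _ => rfl⟩
  smul_mem' r c h := ⟨fun U => Submodule.smul_mem _ _ (h.1 U), fun U hU => by simp [h.2 U hU]⟩

/-- The strand as a function space. -/
def KSEquiv (k : Type) [Field k] (n m d e : ℕ) (μ : ℤ × ℤ) (q : ℕ) : KS k n m d e μ q ≃ₗ[k]
    ({U : Finset (Fin (n+m)) // U.card = q} → grad k n m (μ - (q:ℤ) • ((d:ℤ), (e:ℤ)))) where
  toFun c U := ⟨c.1 U.1, c.2.1 U.1⟩
  invFun c := ⟨fun U => if h : U.card = q then (c ⟨U, h⟩ : PolyS k n m) else 0, by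
    constructor
    · intro U
      simp only
      split_ifs
      · exact Subtype.property _
      · exact zero_mem _
    · intro U hU
      simp [hU]⟩
  map_add' c c' := rfl
  map_smul' r c := rfl
  left_inv c := by
    apply Subtype.ext
    ext1 U
    by_cases h : U.card = q
    · simp [h]
    · simp [h, c.2.2 U h]
  right_inv c := by
    ext1 U
    apply Subtype.ext
    simp [U.2]

instance KS_fin (d e : ℕ) (μ : ℤ × ℤ) (q : ℕ) : FiniteDimensional k (KS k n m d e μ q) :=
  Module.Finite.equiv (KSEquiv k n m d e μ q).symm

lemma KS_finrank (d e : ℕ) (μ : ℤ × ℤ) (q : ℕ) : (Module.finrank k (KS k n m d e μ q) : ℤ) =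
    (Nat.choose (n + m) q : ℤ) *
      ibin ((n : ℤ) + μ.1 - q * d) n * ibin ((m : ℤ) + μ.2 - q * e) m := by
  rw [(KSEquiv k n m d e μ q).finrank_eq, Module.finrank_pi_fintype]
  simp only [Finset.sum_const, Finset.card_univ, smul_eq_mul]
  rw [Fintype.card_finset_len, Fintype.card_fin]
  push_cast
  rw [grad_finrank, mul_assoc]
  simp [add_sub_assoc]

/-- The Koszul differential over `k`. -/
def DK (f : Fin (n+m) → PolyS k n m) :
    (Finset (Fin (n+m)) → PolyS k n m) →ₗ[k] (Finset (Fin (n+m)) → PolyS k n m) :=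
  (kk Fin.val f).restrictScalars k

lemma DK_apply (f : Fin (n+m) → PolyS k n m) (c : Finset (Fin (n+m)) → PolyS k n m) :
    DK f c = kk Fin.val f c := rfl

lemma exact_iff (d e : ℕ) (f : Fin (n+m) → PolyS k n m)
    (I : Ideal (PolyS k n m)) (hCI : IsCIPoints k n m d e f I)
    (μ : ℤ × ℤ) (hμ : ∀ i : ℤ, 2 ≤ i → μ ∉ GammaSet n m d e i) (q : ℕ) (hq : 1 ≤ q) :
    KS k n m d e μ q ⊓ LinearMap.ker (DK f) = (KS k n m d e μ (q+1)).map (DK f) := by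
  apply le_antisymm
  · rintro z ⟨⟨h1, h2⟩, h3⟩
    obtain ⟨u, hu1, hu2, hu3⟩ := koszul_exact d e f I hCI μ hμ q hq z h1
      (fun U hU => by by_contra h; exact hU (h2 U h)) h3
    exact ⟨u, ⟨hu1, fun U hU => by by_contra h; exact hU (hu2 U h)⟩, hu3⟩
  · rintro _ ⟨u, ⟨hu1, hu2⟩, rfl⟩
    refine ⟨⟨?_, ?_⟩, ?_⟩
    · intro U
      rw [DK_apply, kk_apply]
      refine Submodule.sum_mem _ fun i _ => ?_
      rw [hh_apply]
      split_ifs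
      · simp
      · have h1 : (sg Fin.val i U • u (insert i U)) ∈
            grad k n m (μ - ((q+1:ℕ):ℤ) • ((d:ℤ), (e:ℤ))) := zsmul_mem (hu1 _) _
        have h2 := IsWeightedHomogeneous.mul (hCI.1 i) h1
        have h3 : ((d:ℤ), (e:ℤ)) + (μ - ((q+1:ℕ):ℤ) • ((d:ℤ), (e:ℤ))) =
            μ - (q:ℤ) • ((d:ℤ), (e:ℤ)) := by
          push_cast; rw [add_smul, one_smul]; abel
        rw [h3] at h2
        exact h2
    · intro U hU
      by_contra h
      exact hU (kk_zero_of_card Fin.val f u q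
        (fun U hU => by by_contra h; exact hU (hu2 U h)) U h)
    · exact kk_kk Fin.val Fin.val_injective f u

end Count


section Final

variable {k : Type} [Field k] {n m : ℕ}

lemma span_comp (f : Fin (n+m) → PolyS k n m) (δ μ : ℤ × ℤ)
    (hf : ∀ i, IsWeightedHomogeneous (wt n m) (f i) δ) (P : PolyS k n m)
    (hP : P ∈ Ideal.span (Set.range f)) (hPμ : P ∈ grad k n m μ) :
    ∃ c : Fin (n+m) → PolyS k n m, (∀ i, c i ∈ grad k n m (μ - δ)) ∧ ∑ i, f i * c i = P := by
  obtain ⟨c, hc⟩ := (Ideal.mem_span_range_iff_exists_fun).mp hP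
  refine ⟨fun i => weightedHomogeneousComponent (wt n m) (μ - δ) (c i),
    fun i => weightedHomogeneousComponent_isWeightedHomogeneous _ _, ?_⟩
  have h1 : weightedHomogeneousComponent (wt n m) (μ - δ + δ) P = P := by
    rw [sub_add_cancel]
    exact IsWeightedHomogeneous.weightedHomogeneousComponent_same hPμ
  rw [← h1, ← hc, map_sum]
  refine Finset.sum_congr rfl fun i _ => ?_
  rw [mul_comm (c i), comp_mul _ _ _ _ _ (hf i)]

lemma b_zero (d e : ℕ) (f : Fin (n+m) → PolyS k n m)
    (I : Ideal (PolyS k n m)) (hf : ∀ i, f i ∈ grad k n m ((d : ℤ), (e : ℤ)))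
    (hI : I = Ideal.span (Set.range f)) (μ : ℤ × ℤ) :
    Module.finrank k ((KS k n m d e μ 1).map (DK f)) =
      Module.finrank k (grad k n m μ ⊓ LinearMap.ker (Ideal.Quotient.mkₐ k I).toLinearMap :
        Submodule k (PolyS k n m)) := by
  let ev : (Finset (Fin (n+m)) → PolyS k n m) →ₗ[k] PolyS k n m := LinearMap.proj ∅
  have hsupp : ∀ u ∈ KS k n m d e μ 1, ∀ U, U ≠ ∅ → DK f u U = 0 := by
    intro u hu U hU
    by_contra h
    have := kk_zero_of_card Fin.val f u 0
        (fun U hU => by by_contra h; exact hU (hu.2 U h)) U h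
    exact hU (Finset.card_eq_zero.mp this)
  have hval : ∀ u, DK f u ∅ = ∑ i, f i * u {i} := by
    intro u
    rw [DK_apply, kk_apply]
    refine Finset.sum_congr rfl fun i _ => ?_
    simp [hh_apply, sg]
  have e1 : Module.finrank k (((KS k n m d e μ 1).map (DK f)).map ev) =
      Module.finrank k ((KS k n m d e μ 1).map (DK f)) := by
    have h := finrank_map_ker ev ((KS k n m d e μ 1).map (DK f))
    have h0 : (KS k n m d e μ 1).map (DK f) ⊓ LinearMap.ker ev = ⊥ := by
      rw [eq_bot_iff]
      rintro _ ⟨⟨u, hu, rfl⟩, h⟩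
      rw [Submodule.mem_bot]
      ext1 U
      by_cases hU : U = ∅
      · subst hU; exact h
      · exact hsupp u hu U hU
    rw [h0, finrank_bot] at h
    exact h
  rw [← e1]
  suffices hs : ((KS k n m d e μ 1).map (DK f)).map ev =
      grad k n m μ ⊓ LinearMap.ker (Ideal.Quotient.mkₐ k I).toLinearMap by rw [hs]
  have hker : ∀ P, P ∈ LinearMap.ker (Ideal.Quotient.mkₐ k I).toLinearMap ↔ P ∈ I := by
    intro P
    rw [LinearMap.mem_ker]
    exact Ideal.Quotient.eq_zero_iff_mem
  apply le_antisymm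
  · rintro _ ⟨_, ⟨u, hu, rfl⟩, rfl⟩
    change DK f u ∅ ∈ _
    rw [hval]
    refine ⟨Submodule.sum_mem _ fun i _ => ?_, (hker _).mpr (Ideal.sum_mem _ fun i _ => ?_)⟩
    · have h2 := IsWeightedHomogeneous.mul (hf i) (hu.1 {i})
      have h3 : ((d:ℤ), (e:ℤ)) + (μ - ((1:ℕ):ℤ) • ((d:ℤ), (e:ℤ))) = μ := by
        push_cast; rw [one_smul]; abel
      rw [h3] at h2
      exact h2
    · rw [hI]
      exact Ideal.mul_mem_right _ _ (Ideal.subset_span ⟨i, rfl⟩)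
  · rintro P ⟨hP1, hP2⟩
    rw [SetLike.mem_coe, hker, hI] at hP2
    obtain ⟨c, hc, hcP⟩ := span_comp f _ μ hf P hP2 hP1
    have hinj : ∀ i j : Fin (n+m), ({i} : Finset (Fin (n+m))) = {j} ↔ i = j := by simp
    let u : Finset (Fin (n+m)) → PolyS k n m := fun U => ∑ i, if U = {i} then c i else 0
    have hu : u ∈ KS k n m d e μ 1 := by
      constructor
      · intro U
        refine Submodule.sum_mem _ fun i _ => ?_
        split_ifs
        · have := hc i
          simpa using this
        · exact zero_mem _
      · intro U hU
        refine Finset.sum_eq_zero fun i _ => ?_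
        rw [if_neg]
        rintro rfl
        simp at hU
    refine ⟨DK f u, ⟨u, hu, rfl⟩, ?_⟩
    change DK f u ∅ = P
    rw [hval, ← hcP]
    refine Finset.sum_congr rfl fun i _ => ?_
    simp [u]

lemma alt_sum (a b : ℕ → ℤ) (r : ℕ) (h : ∀ q, 1 ≤ q → a q = b (q-1) + b q) :
    ∑ q ∈ Finset.range (r+1), (-1)^q * a q = a 0 - b 0 + (-1)^r * b r := by
  induction r with
  | zero => simp
  | succ r ih =>
    rw [Finset.sum_range_succ, ih, h (r+1) (by omega)]
    simp only [Nat.add_sub_cancel, pow_succ]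
    ring

end Final

theorem stmt9 (k : Type) [Field k] (n m d e : ℕ)
    (f : Fin (n + m) → PolyS k n m) (I : Ideal (PolyS k n m))
    (hCI : IsCIPoints k n m d e f I)
    (μ : ℤ × ℤ) (hμ : ∀ i : ℤ, 2 ≤ i → μ ∉ GammaSet n m d e i) :
    (HFq k n m I μ : ℤ) = chiCI n m d e μ := by
  have hrank : ∀ q, 1 ≤ q → (Module.finrank k (KS k n m d e μ q) : ℤ) =
      (Module.finrank k ((KS k n m d e μ (q-1+1)).map (DK f)) : ℤ) +
      (Module.finrank k ((KS k n m d e μ (q+1)).map (DK f)) : ℤ) := by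
    intro q hq
    rw [← finrank_map_ker (DK f) (KS k n m d e μ q), exact_iff d e f I hCI μ hμ q hq,
      Nat.sub_add_cancel hq]
    push_cast; rfl
  have halt := alt_sum (fun q => (Module.finrank k (KS k n m d e μ q) : ℤ))
    (fun q => (Module.finrank k ((KS k n m d e μ (q+1)).map (DK f)) : ℤ)) (n + m) hrank
  have htop : Module.finrank k ((KS k n m d e μ (n+m+1)).map (DK f)) = 0 := by
    have h0 : Module.finrank k (KS k n m d e μ (n+m+1)) = 0 := by
      have := KS_finrank (k := k) (n := n) (m := m) d e μ (n+m+1)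
      rw [Nat.choose_eq_zero_of_lt (by omega)] at this
      simpa using this
    have := finrank_map_ker (DK f) (KS k n m d e μ (n+m+1))
    omega
  have h00 : Module.finrank k (KS k n m d e μ 0) = Module.finrank k (grad k n m μ) := by
    have h1 := KS_finrank (k := k) (n := n) (m := m) d e μ 0
    have h2 := grad_finrank (k := k) (n := n) (m := m) μ
    simp at h1
    rw [← h2] at h1
    exact_mod_cast h1
  have hq := finrank_map_ker (Ideal.Quotient.mkₐ k I).toLinearMap (grad k n m μ)
  have hb := b_zero d e f I hCI.1 hCI.2.1 μ
  have hchi : chiCI n m d e μ = ∑ q ∈ Finset.range (n+m+1),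
      (-1)^q * (Module.finrank k (KS k n m d e μ q) : ℤ) := by
    unfold chiCI
    refine Finset.sum_congr rfl fun q _ => ?_
    rw [KS_finrank]; ring
  rw [hchi, halt]
  simp only [htop, h00, zero_add, hb]
  unfold HFq quotPiece
  rw [← hq]
  push_cast; ring
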